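/- arXiv:math/0501524 — 2 statements merged into one kernel-verified Lean document; each statement's English description precedes it below -/
import Mathlib

section
/- There is a function f : [ω₁]² → ω₁ such that whenever A, B ⊆ ω₁ are uncountable and ξ < ω₁, there exist α ∈ A and β ∈ B with α < β and f(α,β) = ξ. (In particular the partition relation ω₁ → (ω₁;ω₁)²₂ fails.) -/
/-- The first uncountable ordinal. -/
noncomputable def omega1 : Ordinal := (Cardinal.aleph 1).ord

namespace MooreOsc

open Set

universe u v

/-- A C-sequence with weights. -/
structure CSeq (W : Type u) [LinearOrder W] where
  C : W → Set W
  w : W → W → ℕ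
  lt : ∀ β, ∀ x ∈ C β, x < β
  fin : ∀ α β, α < β → (C β ∩ Iio α).Finite
  cof : ∀ α β, α < β → ∃ c ∈ C β, α ≤ c
  inj : ∀ β, InjOn (w β) (Iio β)

section
variable {W : Type u} [LinearOrder W] [WellFoundedLT W] [OrderBot W]

theorem exists_cseq (hc : ∀ a : W, (Iio a).Countable) : Nonempty (CSeq W) := by
  classical
  have h1 : ∀ β : W, ∃ f : ℕ → W, β ≠ ⊥ → range f = Iio β := by
    intro β
    by_cases h : β = ⊥
    · exact ⟨fun _ => ⊥, fun h' => (h' h).elim⟩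
    · obtain ⟨f, hf⟩ := (hc β).exists_eq_range ⟨⊥, bot_lt_iff_ne_bot.2 h⟩
      exact ⟨f, fun _ => hf.symm⟩
  choose f hf using h1
  have h2 : ∀ β : W, ∃ w : W → ℕ, InjOn w (Iio β) := fun β =>
    (Set.countable_iff_exists_injOn.1 (hc β))
  choose w hw using h2
  refine ⟨⟨fun β => {x | x < β ∧ ∃ n, f β n = x ∧ ∀ m < n, f β m < f β n}, w, fun β x hx => hx.1,
    ?_, ?_, hw⟩⟩
  · intro α β hαβ
    have hb : β ≠ ⊥ := (bot_le.trans_lt hαβ).ne'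
    have : α ∈ range (f β) := by rw [hf β hb]; exact hαβ
    obtain ⟨k, hk⟩ := this
    refine ((Set.finite_Iic k).image (f β)).subset ?_
    rintro x ⟨⟨_, n, rfl, hn⟩, hx⟩
    refine ⟨n, ?_, rfl⟩
    by_contra hkn
    have := hn k (not_le.1 hkn)
    rw [hk] at this
    exact lt_asymm this hx
  · intro α β hαβ
    have hb : β ≠ ⊥ := (bot_le.trans_lt hαβ).ne'
    have : α ∈ range (f β) := by rw [hf β hb]; exact hαβ
    obtain ⟨k, hk⟩ := this
    have hex : ∃ n, α ≤ f β n := ⟨k, hk.ge⟩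
    refine ⟨f β (Nat.find hex), ⟨?_, Nat.find hex, rfl, ?_⟩, Nat.find_spec hex⟩
    · have : f β (Nat.find hex) ∈ range (f β) := ⟨_, rfl⟩
      rw [hf β hb] at this; exact this
    · intro m hm
      exact (not_le.1 (Nat.find_min hex hm)).trans_le (Nat.find_spec hex)

variable (S : CSeq W)

theorem exists_nxt (α β : W) : ∃ c, α < β → c ∈ S.C β ∧ α ≤ c ∧ ∀ x ∈ S.C β, α ≤ x → c ≤ x := by
  by_cases h : α < β
  · obtain ⟨c, hc, hc'⟩ := S.cof α β h
    have hne : {x | x ∈ S.C β ∧ α ≤ x}.Nonempty := ⟨c, hc, hc'⟩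
    have hwf : WellFounded ((· < ·) : W → W → Prop) := wellFounded_lt
    refine ⟨hwf.min _ hne, fun _ => ⟨(hwf.min_mem _ hne).1, (hwf.min_mem _ hne).2, ?_⟩⟩
    intro x hx hx'
    exact not_lt.1 (hwf.not_lt_min {x | x ∈ S.C β ∧ α ≤ x} ⟨hx, hx'⟩)
  · exact ⟨α, fun h' => (h h').elim⟩

noncomputable def nxt (α β : W) : W := (exists_nxt S α β).choose

theorem nxt_mem {α β : W} (h : α < β) : nxt S α β ∈ S.C β := ((exists_nxt S α β).choose_spec h).1
theorem le_nxt {α β : W} (h : α < β) : α ≤ nxt S α β := ((exists_nxt S α β).choose_spec h).2.1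
theorem nxt_le {α β x : W} (h : α < β) (hx : x ∈ S.C β) (hx' : α ≤ x) : nxt S α β ≤ x :=
  ((exists_nxt S α β).choose_spec h).2.2 x hx hx'
theorem nxt_lt {α β : W} (h : α < β) : nxt S α β < β := S.lt _ _ (nxt_mem S h)

open Classical in
noncomputable def prv (α β : W) : W :=
  if h : (S.C β ∩ Iio α).Finite then h.toFinset.sup id else ⊥

theorem le_prv {α β c : W} (h : α < β) (hc : c ∈ S.C β) (hcα : c < α) : c ≤ prv S α β := by
  have hf := S.fin α β h
  rw [prv, dif_pos hf]
  exact Finset.le_sup (f := id) (hf.mem_toFinset.2 ⟨hc, hcα⟩)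

theorem prv_lt {α β : W} (h : α < β) (h0 : ⊥ < α) : prv S α β < α := by
  have hf := S.fin α β h
  rw [prv, dif_pos hf, Finset.sup_lt_iff h0]
  intro b hb
  exact (hf.mem_toFinset.1 hb).2

open Classical in
noncomputable def L (α β : W) : List W :=
  if h : α < β then prv S α β :: (L α (nxt S α β)).filter (fun x => prv S α β < x) else []
termination_by wellFounded_lt.wrap β
decreasing_by exact nxt_lt S h

open Classical in
noncomputable def e (β α : W) : ℕ :=
  if h : α < β then max (S.w β (nxt S α β)) (e (nxt S α β) α) else 0
termination_by wellFounded_lt.wrap β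
decreasing_by exact nxt_lt S h

open Classical in
theorem L_eq {α β : W} (h : α < β) :
    L S α β = prv S α β :: (L S α (nxt S α β)).filter (fun x => prv S α β < x) := by
  rw [L, dif_pos h]

theorem L_self (α : W) : L S α α = [] := by
  rw [L, dif_neg (lt_irrefl _)]

theorem e_eq {α β : W} (h : α < β) :
    e S β α = max (S.w β (nxt S α β)) (e S (nxt S α β) α) := by
  rw [e, dif_pos h]

theorem L_lt {α : W} (h0 : ⊥ < α) : ∀ β, ∀ y ∈ L S α β, y < α := by
  intro β
  induction β using WellFoundedLT.induction with
  | ind β ih =>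
    intro y hy
    by_cases h : α < β
    · rw [L_eq S h] at hy
      rcases List.mem_cons.1 hy with rfl | hy
      · exact prv_lt S h h0
      · exact ih _ (nxt_lt S h) y (List.mem_filter.1 hy).1
    · rw [L, dif_neg h] at hy
      simp at hy

theorem L_ne {α β : W} (h : α < β) : L S α β ≠ [] := by
  rw [L_eq S h]; simp

theorem prv_le_L {α β : W} (h : α < β) : ∀ y ∈ L S α β, prv S α β ≤ y := by
  intro y hy
  rw [L_eq S h] at hy
  rcases List.mem_cons.1 hy with rfl | hy
  · exact le_rfl
  · have := (List.mem_filter.1 hy).2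
    simp only [decide_eq_true_eq] at this
    exact this.le

theorem L_append {α β : W} (h0 : ⊥ < α) (hαβ : α < β) : ∀ γ, β ≤ γ →
    (∀ x ∈ L S β γ, ∀ y ∈ L S α β, x < y) → L S α γ = L S β γ ++ L S α β := by
  intro γ
  induction γ using WellFoundedLT.induction with
  | ind γ ih =>
    intro hβγ H
    rcases hβγ.eq_or_lt with rfl | hβγ
    · rw [L_self]; rfl
    have hαγ := hαβ.trans hβγ
    have hm : ∀ y ∈ L S α β, prv S β γ < y := by
      intro y hy
      refine H _ ?_ y hy
      rw [L_eq S hβγ]; simp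
    have hmα : prv S β γ < α := by
      obtain ⟨y, hy⟩ := List.exists_mem_of_ne_nil _ (L_ne S hαβ)
      exact (hm y hy).trans (L_lt S h0 _ y hy)
    have hC : ∀ c ∈ S.C γ, c < β → c < α := fun c hc hcβ => (le_prv S hβγ hc hcβ).trans_lt hmα
    have hset : S.C γ ∩ Iio α = S.C γ ∩ Iio β := by
      ext c
      exact ⟨fun h => ⟨h.1, lt_trans h.2 hαβ⟩, fun h => ⟨h.1, hC c h.1 h.2⟩⟩
    have hp : prv S α γ = prv S β γ := by
      unfold prv; rw [hset]
    have hn : nxt S α γ = nxt S β γ := by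
      apply le_antisymm
      · exact nxt_le S hαγ (nxt_mem S hβγ) (hαβ.le.trans (le_nxt S hβγ))
      · refine nxt_le S hβγ (nxt_mem S hαγ) ?_
        by_contra hlt
        exact absurd (hC _ (nxt_mem S hαγ) (not_le.1 hlt)) (not_lt.2 (le_nxt S hαγ))
    have key := ih _ (nxt_lt S hβγ) (le_nxt S hβγ) (by
      intro x hx y hy
      by_cases hxm : prv S β γ < x
      · refine H x ?_ y hy
        rw [L_eq S hβγ]
        refine List.mem_cons_of_mem _ (List.mem_filter.2 ⟨hx, by simpa using hxm⟩)
      · exact (not_lt.1 hxm).trans_lt (hm y hy))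
    rw [L_eq S hαγ, L_eq S hβγ, hp, hn, key, List.filter_append, List.cons_append]
    congr 2
    rw [List.filter_eq_self]
    intro y hy
    simpa using hm y hy

theorem e_fin : ∀ β : W, ∀ n, {ξ | ξ < β ∧ e S β ξ ≤ n}.Finite := by
  intro β
  induction β using WellFoundedLT.induction with
  | ind β ih =>
    intro n
    have hZ : {c | c < β ∧ S.w β c ≤ n}.Finite := by
      refine Set.Finite.of_finite_image (f := S.w β) ((Set.finite_Iic n).subset ?_)
        ((S.inj β).mono fun c hc => hc.1)
      rintro _ ⟨c, hc, rfl⟩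
      exact hc.2
    have : (⋃ c ∈ {c | c < β ∧ S.w β c ≤ n}, (insert c {ξ | ξ < c ∧ e S c ξ ≤ n})).Finite :=
      hZ.biUnion fun c hc => (ih c hc.1 n).insert c
    refine this.subset ?_
    rintro ξ ⟨hξ, hn⟩
    rw [e_eq S hξ] at hn
    refine Set.mem_biUnion (x := nxt S ξ β) ⟨nxt_lt S hξ, (le_max_left _ _).trans hn⟩ ?_
    rcases (le_nxt S hξ).eq_or_lt with h | h
    · exact Or.inl h
    · exact Or.inr ⟨h, (le_max_right _ _).trans hn⟩

theorem e_coh : ∀ β : W, ∀ α < β, {ξ | ξ < α ∧ e S α ξ ≠ e S β ξ}.Finite := by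
  intro β
  induction β using WellFoundedLT.induction with
  | ind β ih =>
    intro α hα
    have hΓ : (insert (nxt S α β) (S.C β ∩ Iio (nxt S α β))).Finite :=
      (S.fin _ _ (nxt_lt S hα)).insert _
    have hall : ∀ γ ∈ insert (nxt S α β) (S.C β ∩ Iio (nxt S α β)),
        (insert γ {ξ | ξ < γ ∧ e S γ ξ ≤ S.w β γ} ∪
          {ξ | ξ < γ ∧ ξ < α ∧ e S γ ξ ≠ e S α ξ}).Finite := by
      intro γ hγ
      have hγβ : γ < β := by
        rcases hγ with rfl | hγ
        · exact nxt_lt S hα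
        · exact S.lt _ _ hγ.1
      refine ((e_fin S γ _).insert γ).union ?_
      rcases lt_trichotomy γ α with h | rfl | h
      · exact (ih α hα γ h).subset fun ξ hξ => ⟨hξ.1, hξ.2.2⟩
      · exact (Set.finite_empty).subset fun ξ hξ => (hξ.2.2 rfl).elim
      · exact (ih γ hγβ α h).subset fun ξ hξ => ⟨hξ.2.1, hξ.2.2.symm⟩
    refine (hΓ.biUnion hall).subset ?_
    rintro ξ ⟨hξ, hne⟩
    have hξβ := hξ.trans hα
    refine Set.mem_biUnion (x := nxt S ξ β) ?_ ?_
    · rcases (nxt_le S hξβ (nxt_mem S hα) (hξ.le.trans (le_nxt S hα))).eq_or_lt with h | h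
      · exact Or.inl h
      · exact Or.inr ⟨nxt_mem S hξβ, h⟩
    · rw [e_eq S hξβ] at hne
      rcases (le_nxt S hξβ).eq_or_lt with h | h
      · exact Or.inl (Or.inl h)
      · by_cases h2 : e S (nxt S ξ β) ξ ≤ S.w β (nxt S ξ β)
        · exact Or.inl (Or.inr ⟨h, h2⟩)
        · refine Or.inr ⟨h, hξ, ?_⟩
          rw [max_eq_right (not_le.1 h2).le] at hne
          exact hne.symm

theorem e_coh' {α β : W} (h : α ≤ β) : {ξ | ξ < α ∧ e S α ξ ≠ e S β ξ}.Finite := by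
  rcases h.eq_or_lt with rfl | h
  · exact Set.finite_empty.subset fun ξ hξ => (hξ.2 rfl).elim
  · exact e_coh S _ _ h

/-! ### The oscillation automaton -/

def step (p : Bool × ℕ) (x : Bool) : Bool × ℕ := (x, p.2 + if p.1 && !x then 1 else 0)

def run (p : Bool × ℕ) (l : List Bool) : Bool × ℕ := l.foldl step p

theorem run_append (p : Bool × ℕ) (l m : List Bool) : run p (l ++ m) = run (run p l) m := by
  simp [run]

theorem run_true (l : List Bool) : ∀ (s : Bool) (n : ℕ), l ≠ [] → (∀ x ∈ l, x = true) →
    run (s, n) l = (true, n) := by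
  induction l with
  | nil => intro s n h; exact (h rfl).elim
  | cons x l ih =>
    intro s n _ h
    have hx : x = true := h x (by simp)
    subst hx
    have : run (s, n) (true :: l) = run (true, n) l := by simp [run, step]
    rw [this]
    by_cases hl : l = []
    · subst hl; rfl
    · exact ih _ _ hl fun x hx => h x (List.mem_cons_of_mem _ hx)

theorem run_false (l : List Bool) : ∀ (n : ℕ), (∀ x ∈ l, x = false) →
    run (false, n) l = (false, n) := by
  induction l with
  | nil => intro n h; rfl
  | cons x l ih =>
    intro n h
    have hx : x = false := h x (by simp)
    subst hx
    have : run (false, n) (false :: l) = run (false, n) l := by simp [run, step]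
    rw [this]
    exact ih _ fun x hx => h x (List.mem_cons_of_mem _ hx)

theorem run_false' (l : List Bool) (n : ℕ) (hl : l ≠ []) (h : ∀ x ∈ l, x = false) :
    run (true, n) l = (false, n + 1) := by
  cases l with
  | nil => exact (hl rfl).elim
  | cons x l =>
    have hx : x = false := h x (by simp)
    subst hx
    have : run (true, n) (false :: l) = run (false, n + 1) l := by simp [run, step]
    rw [this]
    exact run_false _ _ fun x hx => h x (List.mem_cons_of_mem _ hx)

theorem run_shift (l : List Bool) : ∀ (s : Bool) (n : ℕ),
    (run (s, n) l).2 = n + (run (s, 0) l).2 := by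
  induction l with
  | nil => intro s n; simp [run]
  | cons x l ih =>
    intro s n
    have : ∀ n, run (s, n) (x :: l) = run (x, n + if s && !x then 1 else 0) l := by
      intro n; simp [run, step]
    rw [this, this, ih, ih _ (0 + _)]
    omega

/-- The comparison word. -/
noncomputable def word (a b : W) (l : List W) : List Bool :=
  l.map fun ξ => decide (e S a ξ ≤ e S b ξ)

noncomputable def osc (a b : W) : ℕ := (run (true, 0) (word S a b (L S a b))).2

theorem word_congr {a b a' b' : W} {l : List W} (ha : l.map (e S a') = l.map (e S a))
    (hb : l.map (e S b') = l.map (e S b)) : word S a' b' l = word S a b l := by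
  rw [List.map_inj_left] at ha hb
  unfold word
  rw [List.map_inj_left]
  intro x hx
  rw [ha x hx, hb x hx]

/-! ### Closure points -/

variable (hc : ∀ a : W, (Iio a).Countable)

include hc in
theorem exists_ub (hu : ¬ (univ : Set W).Countable) {ι : Type*} [Countable ι] (f : ι → W) :
    ∃ b, ∀ i, f i < b := by
  by_contra hcon
  push Not at hcon
  apply hu
  have : (⋃ i, insert (f i) (Iio (f i))).Countable :=
    Set.countable_iUnion fun i => (hc (f i)).insert _
  refine this.mono ?_
  intro x _
  obtain ⟨i, hi⟩ := hcon x
  rw [Set.mem_iUnion]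
  refine ⟨i, ?_⟩
  rcases hi.eq_or_lt with h | h
  · exact Or.inl h
  · exact Or.inr h

include hc in
theorem exists_closed (hu : ¬ (univ : Set W).Countable) {K : Type} [Countable K]
    (g : W → W → List W → K → W) :
    ∃ δ, ⊥ < δ ∧ (∀ x < δ, ∃ y, x < y ∧ y < δ) ∧
      ∀ x < δ, ∀ y < δ, ∀ F : List W, (∀ z ∈ F, z < δ) → ∀ k, g x y F k < δ := by
  have h1 : ∀ z : W, ∃ z', z < z' ∧ ∀ x ≤ z, ∀ y ≤ z, ∀ F : List W, (∀ v ∈ F, v ≤ z) →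
      ∀ k, g x y F k < z' := by
    intro z
    have : Countable (Iic z) := by
      have : (Iic z).Countable := by
        rw [← Set.Iio_insert]; exact (hc z).insert z
      exact this.to_subtype
    obtain ⟨b, hb⟩ := exists_ub hc hu
      (fun p : Iic z × Iic z × List (Iic z) × K => g p.1 p.2.1 (p.2.2.1.map Subtype.val) p.2.2.2)
    obtain ⟨b', hb'⟩ := exists_ub hc hu (fun _ : Unit => z)
    refine ⟨max b b', lt_max_of_lt_right (hb' ()), ?_⟩
    intro x hx y hy F hF k
    obtain ⟨F', rfl⟩ : ∃ F' : List (Iic z), F'.map Subtype.val = F := by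
      lift F to List (Iic z) using hF
      exact ⟨F, rfl⟩
    exact lt_max_of_lt_left (hb (⟨x, hx⟩, ⟨y, hy⟩, F', k))
  choose h hh1 hh2 using h1
  let s : ℕ → W := fun n => h^[n] ⊥
  have hs : ∀ n, s (n + 1) = h (s n) := fun n => Function.iterate_succ_apply' h n ⊥
  have hmono : StrictMono s := strictMono_nat_of_lt_succ fun n => by rw [hs]; exact hh1 _
  have hne : {y | ∀ n, s n < y}.Nonempty := exists_ub hc hu s
  have hwf : WellFounded ((· < ·) : W → W → Prop) := wellFounded_lt
  set δ := hwf.min _ hne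
  have hδ : ∀ n, s n < δ := hwf.min_mem _ hne
  have hδ' : ∀ x < δ, ∃ n, x ≤ s n := by
    intro x hx
    by_contra hcon
    push Not at hcon
    exact hwf.not_lt_min {y | ∀ n, s n < y} (x := x) hcon hx
  refine ⟨δ, bot_le.trans_lt (hδ 0), ?_, ?_⟩
  · intro x hx
    obtain ⟨n, hn⟩ := hδ' x hx
    exact ⟨s (n + 1), hn.trans_lt (hmono n.lt_succ_self), hδ _⟩
  · intro x hx y hy F hF k
    obtain ⟨n, hn⟩ := hδ' x hx
    obtain ⟨m, hm⟩ := hδ' y hy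
    have hFm : ∃ l, ∀ z ∈ F, z ≤ s l := by
      clear hx hn hy hm
      induction F with
      | nil => exact ⟨0, by simp⟩
      | cons z F ih =>
        obtain ⟨l, hl⟩ := ih fun z hz => hF z (List.mem_cons_of_mem _ hz)
        obtain ⟨l', hl'⟩ := hδ' z (hF z (by simp))
        refine ⟨max l l', ?_⟩
        intro v hv
        rcases List.mem_cons.1 hv with rfl | hv
        · exact hl'.trans (hmono.monotone (le_max_right _ _))
        · exact (hl v hv).trans (hmono.monotone (le_max_left _ _))
    obtain ⟨l, hl⟩ := hFm
    have hM : g x y F k < h (s (max n (max m l))) := by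
      refine hh2 _ x (hn.trans (hmono.monotone ?_)) y (hm.trans (hmono.monotone ?_)) F
        (fun v hv => (hl v hv).trans (hmono.monotone ?_)) k
      · exact le_max_left _ _
      · exact (le_max_left _ _).trans (le_max_right _ _)
      · exact (le_max_right _ _).trans (le_max_right _ _)
    rw [← hs] at hM
    exact hM.trans (hδ _)

/-- The elements of `A` with prescribed restriction to `F`. -/
def AF (A : Set W) (F : List W) (s : List ℕ) : Set W := {a | a ∈ A ∧ F.map (e S a) = s}

def DF (A B : Set W) (x y : W) (F : List W) (s t : List ℕ) : Set W :=
  {d | ∃ a ∈ A, ∃ b ∈ B, d ≤ a ∧ d ≤ b ∧ L S d b = F ∧ F.map (e S a) = s ∧ F.map (e S b) = t ∧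
    (∀ ξ, x < ξ → ξ < d → e S a ξ = e S b ξ) ∧
    (∀ ξ, y < ξ → ξ < d → ∀ v ∈ L S ξ d, x < v)}

include hc in
theorem large (hu : ¬ (univ : Set W).Countable) (X : Set W) :
    ∃ g, (∀ a ∈ X, a < g) ∨ ∀ (n : ℕ) (G : List W), (∀ y ∈ G, g < y) → ∀ x, ∃ α ∈ X, x ≤ α ∧
      ∀ ξ ∈ G, n < e S α ξ := by
  by_cases hX : ∃ g, ∀ a ∈ X, a < g
  · obtain ⟨g, hg⟩ := hX
    exact ⟨g, Or.inl hg⟩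
  push Not at hX
  have hn : ∀ n : ℕ, ∃ g, ∀ (G : List W), (∀ y ∈ G, g < y) → ∀ x, ∃ α ∈ X, x ≤ α ∧
      ∀ ξ ∈ G, n < e S α ξ := by
    intro n
    by_contra hcon
    push Not at hcon
    choose G hG x hx using hcon
    have hub : ∀ g, ∃ g', ∀ y ∈ G g, y ≤ g' := by
      intro g
      obtain ⟨b, hb⟩ := exists_ub hc hu (fun i : Fin (G g).length => (G g).get i)
      refine ⟨b, fun y hy => ?_⟩
      obtain ⟨i, rfl⟩ := List.get_of_mem hy
      exact (hb i).le
    choose u hu' using hub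
    let s : ℕ → W := fun n => u^[n] ⊥
    have hs : ∀ n, s (n + 1) = u (s n) := fun n => Function.iterate_succ_apply' u n ⊥
    obtain ⟨b1, hb1⟩ := exists_ub hc hu s
    obtain ⟨b2, hb2⟩ := exists_ub hc hu (fun n => x (s n))
    obtain ⟨α, hα, hα'⟩ := hX (max b1 b2)
    have hlow : ∀ i, ∃ ξ ∈ G (s i), e S α ξ ≤ n := fun i =>
      hx (s i) α hα ((hb2 i).le.trans ((le_max_right _ _).trans hα'))
    choose ξ hξ hξ' using hlow
    have h1 : ∀ i, s i < ξ i := fun i => hG _ _ (hξ i)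
    have h2 : ∀ i, ξ i ≤ s (i + 1) := fun i => by rw [hs]; exact hu' _ _ (hξ i)
    have hmono : StrictMono ξ := strictMono_nat_of_lt_succ fun i => (h2 i).trans_lt (h1 (i + 1))
    refine (Set.infinite_range_of_injective hmono.injective) ((e_fin S α n).subset ?_)
    rintro _ ⟨i, rfl⟩
    exact ⟨(h2 i).trans_lt ((hb1 _).trans_le ((le_max_left _ _).trans hα')), hξ' i⟩
  choose g hg using hn
  obtain ⟨b, hb⟩ := exists_ub hc hu g
  exact ⟨b, Or.inr fun n G hG x => hg n G (fun y hy => (hb n).trans (hG y hy)) x⟩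

structure Good (A B : Set W) (δ : W) : Prop where
  pos : ⊥ < δ
  lim : ∀ x < δ, ∃ y, x < y ∧ y < δ
  g1 : ∀ F : List W, (∀ z ∈ F, z < δ) → ∀ s, ∃ g < δ, (∀ a ∈ AF S A F s, a < g) ∨
    ∀ (n : ℕ) (G : List W), (∀ y ∈ G, g < y) → ∀ x, ∃ α ∈ AF S A F s, x ≤ α ∧
      ∀ ξ ∈ G, n < e S α ξ
  g2 : ∀ x < δ, ∀ F : List W, (∀ z ∈ F, z < δ) → ∀ s, (∀ a ∈ AF S A F s, a < x) ∨
    ∃ a ∈ AF S A F s, x ≤ a ∧ a < δ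
  g3 : ∀ x < δ, ∀ y < δ, ∀ F : List W, (∀ z ∈ F, z < δ) → ∀ s t,
    (∀ d ∈ DF S A B x y F s t, d < δ) ∨ ∀ z, ∃ d ∈ DF S A B x y F s t, z < d

include hc in
theorem exists_good (hu : ¬ (univ : Set W).Countable) (A B : Set W) : ∃ δ, Good S A B δ := by
  have h1 := fun (F : List W) (s : List ℕ) => large S hc hu (AF S A F s)
  choose g1 hg1 using h1
  have h2 : ∀ (x : W) (F : List W) (s : List ℕ), ∃ g, (∀ a ∈ AF S A F s, a < x) ∨
      ∃ a ∈ AF S A F s, x ≤ a ∧ a < g := by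
    intro x F s
    by_cases h : ∃ a ∈ AF S A F s, x ≤ a
    · obtain ⟨a, ha, hxa⟩ := h
      obtain ⟨b, hb⟩ := exists_ub hc hu (fun _ : Unit => a)
      exact ⟨b, Or.inr ⟨a, ha, hxa, hb ()⟩⟩
    · push Not at h
      exact ⟨x, Or.inl h⟩
  choose g2 hg2 using h2
  have h3 : ∀ (x y : W) (F : List W) (s t : List ℕ), ∃ g, (∀ d ∈ DF S A B x y F s t, d ≤ g) ∨
      ∀ z, ∃ d ∈ DF S A B x y F s t, z < d := by
    intro x y F s t
    by_cases h : ∃ g, ∀ d ∈ DF S A B x y F s t, d ≤ g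
    · obtain ⟨g, hg⟩ := h
      exact ⟨g, Or.inl hg⟩
    · push Not at h
      exact ⟨x, Or.inr h⟩
  choose g3 hg3 using h3
  obtain ⟨δ, hpos, hlim, hcl⟩ := exists_closed hc hu (K := List ℕ × List ℕ)
    (fun x y F k => max (g1 F k.1) (max (g2 x F k.1) (g3 x y F k.1 k.2)))
  refine ⟨δ, hpos, hlim, ?_, ?_, ?_⟩
  · intro F hF s
    exact ⟨g1 F s, (le_max_left _ _).trans_lt (hcl ⊥ hpos ⊥ hpos F hF (s, s)), hg1 F s⟩
  · intro x hx F hF s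
    have : g2 x F s < δ := lt_of_le_of_lt ((le_max_left _ _).trans (le_max_right _ _))
      (hcl x hx ⊥ hpos F hF (s, s))
    rcases hg2 x F s with h | ⟨a, ha, hxa, hag⟩
    · exact Or.inl h
    · exact Or.inr ⟨a, ha, hxa, hag.trans this⟩
  · intro x hx y hy F hF s t
    have : g3 x y F s t < δ := lt_of_le_of_lt ((le_max_right _ _).trans (le_max_right _ _))
      (hcl x hx y hy F hF (s, t))
    rcases hg3 x y F s t with h | h
    · exact Or.inl fun d hd => (h d hd).trans_lt this
    · exact Or.inr h

theorem fin_bdd {δ : W} (h0 : ⊥ < δ) {X : Set W} (hX : X.Finite) (h : ∀ x ∈ X, x < δ) :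
    ∃ γ < δ, ∀ x ∈ X, x ≤ γ := by
  refine ⟨hX.toFinset.sup id, ?_, ?_⟩
  · rw [Finset.sup_lt_iff h0]
    intro x hx
    exact h x (hX.mem_toFinset.1 hx)
  · intro x hx
    exact Finset.le_sup (f := id) (hX.mem_toFinset.2 hx)

theorem L_tail {δ γ : W} (hlim : ∀ x < δ, ∃ y, x < y ∧ y < δ) (hγ : γ < δ) :
    ∃ c < δ, ∀ ξ, c < ξ → ξ < δ → ∀ v ∈ L S ξ δ, γ < v := by
  obtain ⟨γ', h1, h2⟩ := hlim γ hγ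
  obtain ⟨c, hc, hc'⟩ := S.cof γ' δ h2
  refine ⟨c, S.lt _ _ hc, ?_⟩
  intro ξ hcξ hξ v hv
  exact h1.trans_le (hc'.trans ((le_prv S hξ hc hcξ).trans (prv_le_L S hξ v hv)))

variable {A B : Set W} {δ : W}

theorem step_eq (hG : Good S A B δ) {a b γ : W} (ha : a ∈ A) (hb : b ∈ B) (hδa : δ ≤ a)
    (hδb : δ ≤ b) (hγ : γ < δ) : ∃ a' ∈ A, ∃ b' ∈ B, δ ≤ a' ∧ δ ≤ b' ∧ ∃ l : List W, l ≠ [] ∧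
      L S δ b' = L S δ b ++ l ∧ (L S δ b).map (e S a') = (L S δ b).map (e S a) ∧
      (L S δ b).map (e S b') = (L S δ b).map (e S b) ∧
      ∀ ξ ∈ l, γ < ξ ∧ e S a' ξ = e S b' ξ := by
  classical
  have hLlt : ∀ z ∈ L S δ b, z < δ := L_lt S hG.pos b
  obtain ⟨x, hxδ, hx⟩ := fin_bdd hG.pos
    (X := insert γ ({z | z ∈ L S δ b} ∪ ({ξ | ξ < δ ∧ e S δ ξ ≠ e S a ξ} ∪
      {ξ | ξ < δ ∧ e S δ ξ ≠ e S b ξ})))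
    (((List.finite_toSet _).union ((e_coh' S hδa).union (e_coh' S hδb))).insert γ)
    (by
      rintro z (rfl | hz | hz | hz)
      · exact hγ
      · exact hLlt z hz
      · exact hz.1
      · exact hz.1)
  obtain ⟨y, hyδ, hy⟩ := L_tail S hG.lim hxδ
  have hδD : δ ∈ DF S A B x y (L S δ b) ((L S δ b).map (e S a)) ((L S δ b).map (e S b)) := by
    refine ⟨a, ha, b, hb, hδa, hδb, rfl, rfl, rfl, ?_, hy⟩
    intro ξ hxξ hξ
    have h1 : e S δ ξ = e S a ξ := by
      by_contra h
      exact absurd (hx ξ (Or.inr (Or.inr (Or.inl ⟨hξ, h⟩)))) (not_le.2 hxξ)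
    have h2 : e S δ ξ = e S b ξ := by
      by_contra h
      exact absurd (hx ξ (Or.inr (Or.inr (Or.inr ⟨hξ, h⟩)))) (not_le.2 hxξ)
    rw [← h1, h2]
  rcases hG.g3 x hxδ y hyδ (L S δ b) hLlt ((L S δ b).map (e S a)) ((L S δ b).map (e S b))
    with h | h
  · exact absurd (h δ hδD) (lt_irrefl _)
  obtain ⟨d, ⟨a', ha', b', hb', hda, hdb, hL, hma, hmb, heq, htail⟩, hδd⟩ := h δ
  have hgt := htail δ hyδ hδd
  refine ⟨a', ha', b', hb', hδd.le.trans hda, hδd.le.trans hdb, L S δ d, L_ne S hδd, ?_, hma, hmb,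
    ?_⟩
  · rw [← hL]
    refine L_append S hG.pos hδd b' hdb ?_
    intro v hv z hz
    rw [hL] at hv
    exact (hx v (Or.inr (Or.inl hv))).trans_lt (hgt z hz)
  · intro ξ hξ
    refine ⟨(hx γ (Or.inl rfl)).trans_lt (hgt ξ hξ), heq ξ (hgt ξ hξ) ?_⟩
    exact (L_lt S hG.pos d ξ hξ).trans hδd

theorem step_gt (hG : Good S A B δ) {a b : W} (ha : a ∈ A) (hb : b ∈ B) (hδa : δ ≤ a)
    (hδb : δ ≤ b) : ∃ a' ∈ A, ∃ b' ∈ B, δ ≤ a' ∧ δ ≤ b' ∧ ∃ l : List W, l ≠ [] ∧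
      L S δ b' = L S δ b ++ l ∧ (L S δ b).map (e S a') = (L S δ b).map (e S a) ∧
      (L S δ b).map (e S b') = (L S δ b).map (e S b) ∧
      ∀ ξ ∈ l, e S b' ξ < e S a' ξ := by
  have hLlt : ∀ z ∈ L S δ b, z < δ := L_lt S hG.pos b
  obtain ⟨g, hgδ, hg⟩ := hG.g1 (L S δ b) hLlt ((L S δ b).map (e S a))
  rcases hg with hg | hg
  · exact absurd (hg a ⟨ha, rfl⟩) (not_lt.2 (hgδ.le.trans hδa))
  obtain ⟨a', ha', b', hb', hδa', hδb', l, hl, hL, hma, hmb, hξ⟩ :=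
    step_eq S hG ha hb hδa hδb hgδ
  obtain ⟨α, ⟨hα, hαm⟩, hδα, hαl⟩ := hg (l.map (e S b')).sum l (fun y hy => (hξ y hy).1) δ
  refine ⟨α, hα, b', hb', hδα, hδb', l, hl, hL, hαm, hmb, ?_⟩
  intro ξ h
  refine lt_of_le_of_lt ?_ (hαl ξ h)
  exact List.single_le_sum (fun _ _ => Nat.zero_le _) _ (List.mem_map_of_mem h)

theorem build (hG : Good S A B δ) {a₀ b₀ : W} (ha₀ : a₀ ∈ A) (hb₀ : b₀ ∈ B) (hδa : δ ≤ a₀)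
    (hδb : δ ≤ b₀) (N : ℕ) : ∃ a ∈ A, δ ≤ a ∧ ∃ c : ℕ, ∃ bN ∈ B, δ ≤ bN ∧
      run (true, 0) (word S a bN (L S δ bN)) = (true, c + N) ∧
      ∀ i ≤ N, ∃ b ∈ B, δ ≤ b ∧ (∀ z ∈ L S δ b, z ∈ L S δ bN) ∧
        run (true, 0) (word S a b (L S δ b)) = (true, c + i) := by
  induction N with
  | zero =>
    obtain ⟨a', ha', b', hb', hδa', hδb', l, hl, hL, hma, hmb, hξ⟩ :=
      step_eq S hG ha₀ hb₀ hδa hδb hG.pos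
    have hrun : ∃ c, run (true, 0) (word S a' b' (L S δ b')) = (true, c) := by
      refine ⟨(run (true, 0) (word S a' b' (L S δ b₀))).2, ?_⟩
      have : word S a' b' (L S δ b') = word S a' b' (L S δ b₀) ++ word S a' b' l := by
        rw [hL, word, List.map_append]; rfl
      rw [this, run_append]
      refine run_true _ _ _ (by simpa [word] using hl) ?_
      intro x hx
      obtain ⟨ξ, h, rfl⟩ := List.mem_map.1 hx
      simp [(hξ ξ h).2]
    obtain ⟨c, hc⟩ := hrun
    refine ⟨a', ha', hδa', c, b', hb', hδb', hc, ?_⟩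
    intro i hi
    obtain rfl : i = 0 := by omega
    exact ⟨b', hb', hδb', fun z hz => hz, hc⟩
  | succ N ih =>
    obtain ⟨a, ha, hδa, c, bN, hbN, hδbN, hrun, hall⟩ := ih
    obtain ⟨a1, ha1, b1, hb1, hδa1, hδb1, l1, hl1, hL1, hma1, hmb1, hξ1⟩ :=
      step_gt S hG ha hbN hδa hδbN
    obtain ⟨a2, ha2, b2, hb2, hδa2, hδb2, l2, hl2, hL2, hma2, hmb2, hξ2⟩ :=
      step_eq S hG ha1 hb1 hδa1 hδb1 hG.pos
    have hr1 : run (true, 0) (word S a1 b1 (L S δ b1)) = (false, c + N + 1) := by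
      have : word S a1 b1 (L S δ b1) = word S a bN (L S δ bN) ++ word S a1 b1 l1 := by
        rw [← word_congr S hma1 hmb1, hL1, word, List.map_append]; rfl
      rw [this, run_append, hrun]
      refine run_false' _ _ (by simpa [word] using hl1) ?_
      intro x hx
      obtain ⟨ξ, h, rfl⟩ := List.mem_map.1 hx
      simpa using hξ1 ξ h
    have hr2 : run (true, 0) (word S a2 b2 (L S δ b2)) = (true, c + (N + 1)) := by
      have : word S a2 b2 (L S δ b2) = word S a1 b1 (L S δ b1) ++ word S a2 b2 l2 := by
        rw [← word_congr S hma2 hmb2, hL2, word, List.map_append]; rfl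
      rw [this, run_append, hr1]
      refine run_true _ _ _ (by simpa [word] using hl2) ?_
      intro x hx
      obtain ⟨ξ, h, rfl⟩ := List.mem_map.1 hx
      simp [(hξ2 ξ h).2]
    have hsub : ∀ z ∈ L S δ bN, z ∈ L S δ b1 := by
      intro z hz; rw [hL1]; exact List.mem_append_left _ hz
    have hsub2 : ∀ z ∈ L S δ b1, z ∈ L S δ b2 := by
      intro z hz; rw [hL2]; exact List.mem_append_left _ hz
    refine ⟨a2, ha2, hδa2, c, b2, hb2, hδb2, hr2, ?_⟩
    intro i hi
    rcases Nat.lt_or_ge N i with h | h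
    · obtain rfl : i = N + 1 := by omega
      exact ⟨b2, hb2, hδb2, fun z hz => hz, hr2⟩
    · obtain ⟨b, hb, hδb, hs, hr⟩ := hall i h
      refine ⟨b, hb, hδb, fun z hz => hsub2 z (hsub z (hs z hz)), ?_⟩
      rw [← hr]
      congr 1
      apply word_congr S _ rfl
      rw [List.map_inj_left] at hma1 hma2 ⊢
      intro z hz
      rw [hma2 z (hsub z (hs z hz)), hma1 z (hs z hz)]

include hc in
theorem osc_main (hA : ¬ A.Countable) (hB : ¬ B.Countable) (N : ℕ) :
    ∃ c : ℕ, ∀ i ≤ N, ∃ α ∈ A, ∃ β ∈ B, α < β ∧ osc S α β = c + i := by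
  have hu : ¬ (univ : Set W).Countable := fun h => hA (h.mono (subset_univ _))
  obtain ⟨δ, hG⟩ := exists_good S hc hu A B
  have hunb : ∀ X : Set W, ¬ X.Countable → ∃ a ∈ X, δ ≤ a := by
    intro X hX
    by_contra h
    push Not at h
    exact hX ((hc δ).mono h)
  obtain ⟨a₀, ha₀, hδa₀⟩ := hunb A hA
  obtain ⟨b₀, hb₀, hδb₀⟩ := hunb B hB
  obtain ⟨a, ha, hδa, c, bN, hbN, hδbN, hrun, hall⟩ := build S hG ha₀ hb₀ hδa₀ hδb₀ N
  choose! b hb hδb hsub hr using hall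
  obtain ⟨x, hxδ, hx⟩ := fin_bdd hG.pos
    (X := {z | z ∈ L S δ bN} ∪ ⋃ i ∈ Iic N, {ξ | ξ < δ ∧ e S δ ξ ≠ e S (b i) ξ})
    ((List.finite_toSet _).union ((Set.finite_Iic N).biUnion fun i hi => e_coh' S (hδb i hi)))
    (by
      rintro z (hz | hz)
      · exact L_lt S hG.pos _ z hz
      · simp only [Set.mem_iUnion] at hz
        obtain ⟨i, hi, hz⟩ := hz
        exact hz.1)
  obtain ⟨y, hyδ, hy⟩ := L_tail S hG.lim hxδ
  obtain ⟨y', hyy', hy'δ⟩ := hG.lim y hyδ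
  obtain ⟨α, ⟨hα, hαm⟩, hyα, hαδ⟩ : ∃ α ∈ AF S A (L S δ bN) ((L S δ bN).map (e S a)),
      y' ≤ α ∧ α < δ := by
    rcases hG.g2 y' hy'δ (L S δ bN) (L_lt S hG.pos _) ((L S δ bN).map (e S a)) with h | h
    · exact absurd (h a ⟨ha, rfl⟩) (not_lt.2 (hy'δ.le.trans hδa))
    · exact h
  have hyα' : y < α := hyy'.trans_le hyα
  have hα0 : ⊥ < α := bot_le.trans_lt hyα'
  have htail := hy α hyα' hαδ
  refine ⟨c + (run (true, 0) (word S α δ (L S α δ))).2, ?_⟩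
  intro i hi
  refine ⟨α, hα, b i, hb i hi, hαδ.trans_le (hδb i hi), ?_⟩
  have hL : L S α (b i) = L S δ (b i) ++ L S α δ := by
    refine L_append S hα0 hαδ _ (hδb i hi) ?_
    intro v hv z hz
    exact (hx v (Or.inl (hsub i hi v hv))).trans_lt (htail z hz)
  have hw : word S α (b i) (L S α (b i)) =
      word S a (b i) (L S δ (b i)) ++ word S α δ (L S α δ) := by
    rw [hL]
    unfold word
    rw [List.map_append]
    congr 1
    · rw [List.map_inj_left] at hαm ⊢
      intro z hz
      rw [hαm z (hsub i hi z hz)]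
    · rw [List.map_inj_left]
      intro z hz
      have : e S δ z = e S (b i) z := by
        by_contra h
        refine absurd (hx z (Or.inr ?_)) (not_le.2 (htail z hz))
        simp only [Set.mem_iUnion]
        exact ⟨i, hi, (L_lt S hα0 _ z hz).trans hαδ, h⟩
      rw [this]
  rw [osc, hw, run_append, hr i hi, run_shift]
  omega

theorem padic_interval (c k : ℕ) : ∃ i ≤ 2 ^ (k + 1) + 2 ^ k, padicValNat 2 (c + i) = k := by
  have hp : 0 < 2 ^ (k + 1) := by positivity
  have h1 := Nat.div_add_mod c (2 ^ (k + 1))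
  have h2 := Nat.mod_lt c hp
  refine ⟨2 ^ (k + 1) - c % 2 ^ (k + 1) + 2 ^ k, by omega, ?_⟩
  have : c + (2 ^ (k + 1) - c % 2 ^ (k + 1) + 2 ^ k) =
      2 ^ k * (2 * (c / 2 ^ (k + 1) + 1) + 1) := by
    have h3 : 2 ^ k * (2 * (c / 2 ^ (k + 1) + 1) + 1) =
      2 ^ (k + 1) * (c / 2 ^ (k + 1)) + 2 ^ (k + 1) + 2 ^ k := by ring
    rw [h3]
    omega
  rw [this]
  have hfact : Fact (Nat.Prime 2) := ⟨Nat.prime_two⟩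
  rw [padicValNat.mul (by positivity) (by omega), padicValNat.prime_pow,
    padicValNat.eq_zero_of_not_dvd (by omega)]
  rfl

end

theorem main {W : Type u} [LinearOrder W] [WellFoundedLT W] [OrderBot W]
    (hc : ∀ a : W, (Iio a).Countable) : ∃ f : W → W → W, ∀ A B : Set W, ¬ A.Countable →
      ¬ B.Countable → ∀ ξ, ∃ α ∈ A, ∃ β ∈ B, α < β ∧ f α β = ξ := by
  obtain ⟨S⟩ := exists_cseq hc
  have h1 : ∀ β : W, ∃ f : ℕ → W, ∀ ξ < β, ∃ n, f n = ξ := by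
    intro β
    by_cases h : β = ⊥
    · exact ⟨fun _ => ⊥, fun ξ h' => by rw [h] at h'; exact (not_lt_bot h').elim⟩
    · obtain ⟨f, hf⟩ := (hc β).exists_eq_range ⟨⊥, bot_lt_iff_ne_bot.2 h⟩
      refine ⟨f, fun ξ hξ => ?_⟩
      have : ξ ∈ range f := hf ▸ hξ
      exact this
  choose h hh using h1
  refine ⟨fun α β => h β (padicValNat 2 (osc S α β)), ?_⟩
  intro A B hA hB ξ
  obtain ⟨k, hk⟩ : ∃ k, ¬ {β | β ∈ B ∧ h β k = ξ}.Countable := by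
    by_contra hcon
    push Not at hcon
    apply hB
    refine ((Set.countable_iUnion hcon).union ((hc ξ).insert ξ)).mono ?_
    intro β hβ
    rcases lt_or_ge ξ β with hlt | hle
    · obtain ⟨n, hn⟩ := hh β ξ hlt
      exact Or.inl (Set.mem_iUnion.2 ⟨n, hβ, hn⟩)
    · rcases hle.eq_or_lt with heq | hlt
      · exact Or.inr (Or.inl heq)
      · exact Or.inr (Or.inr hlt)
  obtain ⟨c, hcc⟩ := osc_main S hc hA hk (2 ^ (k + 1) + 2 ^ k)
  obtain ⟨i, hi, hik⟩ := padic_interval c k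
  obtain ⟨α, hα, β, ⟨hβ, hβk⟩, hlt, ho⟩ := hcc i hi
  refine ⟨α, hα, β, hβ, hlt, ?_⟩
  change h β (padicValNat 2 (osc S α β)) = ξ
  rw [ho, hik, hβk]

theorem countable_Iio {a : Ordinal.{u}} (ha : a < omega1.{u}) : (Iio a).Countable := by
  rw [← Cardinal.le_aleph0_iff_set_countable, Cardinal.mk_Iio_ordinal]
  have : a.card < Cardinal.aleph 1 := Cardinal.lt_ord.1 ha
  rw [← Cardinal.succ_aleph0, Order.lt_succ_iff] at this
  rw [Cardinal.lift_le_aleph0]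
  exact this

theorem exists_transfer : ∃ g : Ordinal.{u} → Ordinal.{v}, ∀ ξ < omega1.{v}, ∃ η < omega1.{u},
    g η = ξ := by
  classical
  refine ⟨fun η => if h : ∃ ξ : Ordinal.{v}, Ordinal.lift.{u} ξ = Ordinal.lift.{v} η then h.choose
    else 0, ?_⟩
  intro ξ hξ
  have h1 : Ordinal.lift.{u} ξ < Ordinal.lift.{v} omega1.{u} := by
    have h2 : Ordinal.lift.{v} omega1.{u} = Ordinal.lift.{u} omega1.{v} := by
      simp [omega1]
    rw [h2]
    exact Ordinal.lift_lt.2 hξ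
  obtain ⟨η, hη⟩ := Ordinal.mem_range_lift_of_le h1.le
  refine ⟨η, ?_, ?_⟩
  · rw [← hη] at h1
    exact Ordinal.lift_lt.1 h1
  · have h : ∃ ξ : Ordinal.{v}, Ordinal.lift.{u} ξ = Ordinal.lift.{v} η := ⟨ξ, hη.symm⟩
    simp only [dif_pos h]
    exact Ordinal.lift_inj.1 (h.choose_spec.trans hη)

end MooreOsc

theorem statement0 :
    ∃ f : Ordinal → Ordinal → Ordinal,
      ∀ A B : Set Ordinal,
        A ⊆ Set.Iio omega1 → B ⊆ Set.Iio omega1 →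
        ¬ A.Countable → ¬ B.Countable →
        ∀ ξ < omega1, ∃ α ∈ A, ∃ β ∈ B, α < β ∧ f α β = ξ := by
  classical
  have h0 : (0 : Ordinal) < omega1 := by
    rw [omega1, Cardinal.lt_ord]
    simpa using Cardinal.aleph_pos 1
  let _ : OrderBot (Set.Iio omega1) := { bot := ⟨0, h0⟩, bot_le := fun a => bot_le (a := (a : Ordinal)) }
  obtain ⟨f, hf⟩ := MooreOsc.main (W := Set.Iio omega1) (by
    intro a
    have := MooreOsc.countable_Iio a.2
    exact this.preimage Subtype.val_injective)
  obtain ⟨g, hg⟩ := MooreOsc.exists_transfer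
  refine ⟨fun α β => if h : α < omega1 ∧ β < omega1 then g (f ⟨α, h.1⟩ ⟨β, h.2⟩) else 0, ?_⟩
  intro A B hA hB hAc hBc ξ hξ
  have hpre : ∀ X : Set Ordinal, X ⊆ Set.Iio omega1 → ¬ X.Countable →
      ¬ {x : Set.Iio omega1 | (x : Ordinal) ∈ X}.Countable := by
    intro X hX hXc h
    apply hXc
    refine (h.image Subtype.val).mono ?_
    intro x hx
    exact ⟨⟨x, hX hx⟩, hx, rfl⟩
  obtain ⟨η, hη, hgη⟩ := hg ξ hξ
  obtain ⟨α, hα, β, hβ, hlt, he⟩ := hf _ _ (hpre A hA hAc) (hpre B hB hBc) ⟨η, hη⟩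
  refine ⟨α, hα, β, hβ, hlt, ?_⟩
  have h : (α : Ordinal) < omega1 ∧ (β : Ordinal) < omega1 := ⟨α.2, β.2⟩
  simp only [dif_pos h]
  rw [show (⟨(α : Ordinal), h.1⟩ : Set.Iio omega1) = α from rfl,
    show (⟨(β : Ordinal), h.2⟩ : Set.Iio omega1) = β from rfl, he, hgη]
end

section
/- There exists a regular Hausdorff topological space that is hereditarily Lindelöf and not separable (an L space). -/
namespace LSpace

open Set

section Walks

variable {Ω : Type} [LinearOrder Ω] [OrderBot Ω] [WellFoundedLT Ω]
  [hc : ∀ a : Ω, Countable (Set.Iio a)]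

theorem exists_C : ∃ C : Ω → Set Ω, (∀ β, C β ⊆ Set.Iio β) ∧
    (∀ β ξ, ξ < β → (C β ∩ Set.Iio ξ).Finite) ∧
    ∀ β ξ, ξ < β → ∃ η ∈ C β, ξ ≤ η := by
  have h : ∀ β : Ω, ∃ c : Set Ω, c ⊆ Set.Iio β ∧
      (∀ ξ, ξ < β → (c ∩ Set.Iio ξ).Finite) ∧ ∀ ξ, ξ < β → ∃ η ∈ c, ξ ≤ η := by
    intro β
    obtain ⟨idx, hidx⟩ := Countable.exists_injective_nat (Set.Iio β)
    refine ⟨{η | ∃ h : η < β, ∀ ξ : Set.Iio β, idx ξ < idx ⟨η, h⟩ → ξ.1 < η}, ?_, ?_, ?_⟩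
    · rintro η ⟨h, -⟩
      exact h
    · intro ξ hξ
      have hf : ({y : Set.Iio β | idx y ≤ idx ⟨ξ, hξ⟩}).Finite :=
        (Set.finite_Iic (idx ⟨ξ, hξ⟩)).preimage hidx.injOn
      refine (hf.image Subtype.val).subset ?_
      rintro η ⟨⟨h, hη⟩, hlt⟩
      refine ⟨⟨η, h⟩, ?_, rfl⟩
      by_contra hcon
      have := hη ⟨ξ, hξ⟩ (not_le.1 hcon)
      exact absurd hlt (not_lt.2 this.le)
    · intro ξ hξ
      have hne : ∃ n, ∃ y : Set.Iio β, ξ ≤ y.1 ∧ idx y = n := ⟨_, ⟨ξ, hξ⟩, le_rfl, rfl⟩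
      classical
      obtain ⟨y, hy, hyn⟩ := Nat.find_spec hne
      refine ⟨y.1, ⟨y.2, ?_⟩, hy⟩
      intro z hz
      have h1 : idx z < Nat.find hne := by rw [← hyn]; exact hz
      have h2 := Nat.find_min hne h1
      by_contra hcon
      exact h2 ⟨z, hy.trans (not_lt.1 hcon), rfl⟩
  choose C h1 h2 h3 using h
  exact ⟨C, h1, h2, h3⟩

noncomputable def Cs (β : Ω) : Set Ω := (exists_C (Ω := Ω)).choose β

theorem Cs_lt {β x : Ω} (h : x ∈ Cs β) : x < β := (exists_C (Ω := Ω)).choose_spec.1 β h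

theorem Cs_fin {β ξ : Ω} (h : ξ < β) : (Cs β ∩ Set.Iio ξ).Finite :=
  (exists_C (Ω := Ω)).choose_spec.2.1 β ξ h

theorem Cs_cof {β ξ : Ω} (h : ξ < β) : ∃ η ∈ Cs β, ξ ≤ η :=
  (exists_C (Ω := Ω)).choose_spec.2.2 β ξ h

theorem exists_nxt (β α : Ω) : ∃ γ, α < β → (γ ∈ Cs β ∧ α ≤ γ ∧ ∀ η ∈ Cs β, α ≤ η → γ ≤ η) := by
  by_cases h : α < β
  · have hne : {η | η ∈ Cs β ∧ α ≤ η}.Nonempty := Cs_cof h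
    refine ⟨wellFounded_lt.min _ hne, fun _ => ⟨(wellFounded_lt.min_mem _ hne).1,
      (wellFounded_lt.min_mem _ hne).2, fun η h1 h2 => ?_⟩⟩
    exact not_lt.1 (wellFounded_lt.not_lt_min _ (show η ∈ {η | η ∈ Cs β ∧ α ≤ η} from ⟨h1, h2⟩))
  · exact ⟨α, fun h' => absurd h' h⟩

noncomputable def nxt (β α : Ω) : Ω := (exists_nxt β α).choose

theorem nxt_mem {β α : Ω} (h : α < β) : nxt β α ∈ Cs β := ((exists_nxt β α).choose_spec h).1
theorem le_nxt {β α : Ω} (h : α < β) : α ≤ nxt β α := ((exists_nxt β α).choose_spec h).2.1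
theorem nxt_le {β α η : Ω} (h : α < β) (h1 : η ∈ Cs β) (h2 : α ≤ η) : nxt β α ≤ η :=
  ((exists_nxt β α).choose_spec h).2.2 η h1 h2
theorem nxt_lt {β α : Ω} (h : α < β) : nxt β α < β := Cs_lt (nxt_mem h)

open Classical in
noncomputable def low (β α : Ω) : Finset Ω := if h : α < β then (Cs_fin h).toFinset else ∅

theorem mem_low {β α x : Ω} (h : α < β) : x ∈ low β α ↔ x ∈ Cs β ∧ x < α := by
  simp [low, h]

noncomputable def mx (β α : Ω) : Ω := (low β α).sup id

theorem le_mx {β α x : Ω} (h : α < β) (h1 : x ∈ Cs β) (h2 : x < α) : x ≤ mx β α :=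
  Finset.le_sup (f := id) ((mem_low h).2 ⟨h1, h2⟩)

theorem mx_le {β α : Ω} (h : α < β) : mx β α ≤ α :=
  Finset.sup_le fun x hx => ((mem_low h).1 hx).2.le

theorem mx_lt {β α : Ω} (h : α < β) (h0 : ⊥ < α) : mx β α < α := by
  rw [mx, Finset.sup_lt_iff h0]
  exact fun x hx => ((mem_low h).1 hx).2

noncomputable def Lt (α β : Ω) : Finset Ω :=
  open Classical in
  if h : α < β then insert (mx β α) ((Lt α (nxt β α)).filter (mx β α ≤ ·)) else ∅
termination_by (wellFounded_lt (α := Ω)).wrap β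
decreasing_by exact nxt_lt h

theorem mem_Lt {α β x : Ω} (h : α < β) :
    x ∈ Lt α β ↔ x = mx β α ∨ (x ∈ Lt α (nxt β α) ∧ mx β α ≤ x) := by
  rw [Lt]
  simp [h]

theorem Lt_self (α : Ω) : Lt α α = ∅ := by
  rw [Lt]; simp

theorem Lt_nonempty {α β : Ω} (h : α < β) : (Lt α β).Nonempty := ⟨_, (mem_Lt h).2 (Or.inl rfl)⟩

theorem mx_le_of_mem_Lt {α β x : Ω} (h : α < β) (hx : x ∈ Lt α β) : mx β α ≤ x := by
  rcases (mem_Lt h).1 hx with rfl | h'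
  · exact le_rfl
  · exact h'.2

theorem Lt_le {α β : Ω} (h : α ≤ β) : ∀ x ∈ Lt α β, x ≤ α := by
  induction β using WellFoundedLT.induction with
  | ind β ih =>
    intro x hx
    rcases h.eq_or_lt with rfl | h
    · simp [Lt_self] at hx
    · rcases (mem_Lt h).1 hx with rfl | h'
      · exact mx_le h
      · exact ih _ (nxt_lt h) (le_nxt h) x h'.1

theorem Lt_lt {α β : Ω} (h0 : ⊥ < α) (h : α ≤ β) : ∀ x ∈ Lt α β, x < α := by
  induction β using WellFoundedLT.induction with
  | ind β ih =>
    intro x hx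
    rcases h.eq_or_lt with rfl | h
    · simp [Lt_self] at hx
    · rcases (mem_Lt h).1 hx with rfl | h'
      · exact mx_lt h h0
      · exact ih _ (nxt_lt h) (le_nxt h) x h'.1

theorem Lt_union {α β γ : Ω} (hab : α ≤ β) (hbc : β ≤ γ)
    (h : ∀ x ∈ Lt β γ, ∀ y ∈ Lt α β, x < y) :
    ∀ z, z ∈ Lt α γ ↔ z ∈ Lt β γ ∨ z ∈ Lt α β := by
  rcases hab.eq_or_lt with rfl | hab
  · intro z; simp [Lt_self]
  induction γ using WellFoundedLT.induction with
  | ind γ ih =>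
    rcases hbc.eq_or_lt with rfl | hbc
    · intro z; simp [Lt_self]
    have hac := hab.trans hbc
    obtain ⟨y, hy⟩ := Lt_nonempty hab
    have hmy : ∀ y ∈ Lt α β, mx γ β < y := fun y hy => h _ ((mem_Lt hbc).2 (Or.inl rfl)) y hy
    have hma : mx γ β < α := (hmy y hy).trans_le (Lt_le hab.le y hy)
    have hlow : low γ α = low γ β := by
      ext x
      rw [mem_low hac, mem_low hbc]
      exact ⟨fun hx => ⟨hx.1, hx.2.trans hab⟩,
        fun hx => ⟨hx.1, (le_mx hbc hx.1 hx.2).trans_lt hma⟩⟩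
    have hmx : mx γ α = mx γ β := by rw [mx, hlow, mx]
    have hnx : nxt γ α = nxt γ β := by
      apply le_antisymm
      · exact nxt_le hac (nxt_mem hbc) (hab.le.trans (le_nxt hbc))
      · refine nxt_le hbc (nxt_mem hac) ?_
        by_contra hcon
        have h1 := le_mx hbc (nxt_mem hac) (not_le.1 hcon)
        exact absurd (h1.trans_lt hma) (not_lt.2 (le_nxt hac))
    have hih := ih (nxt γ β) (nxt_lt hbc) (le_nxt hbc) (by
      intro x hx y hy
      by_cases hxm : mx γ β ≤ x
      · exact h x ((mem_Lt hbc).2 (Or.inr ⟨hx, hxm⟩)) y hy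
      · exact (not_le.1 hxm).trans (hmy y hy))
    intro z
    rw [mem_Lt hac, hmx, hnx, hih, mem_Lt hbc]
    constructor
    · rintro (h1 | ⟨h1 | h1, h2⟩)
      · exact Or.inl (Or.inl h1)
      · exact Or.inl (Or.inr ⟨h1, h2⟩)
      · exact Or.inr h1
    · rintro ((h1 | ⟨h1, h2⟩) | h1)
      · exact Or.inl h1
      · exact Or.inr ⟨Or.inl h1, h2⟩
      · exact Or.inr ⟨Or.inr h1, (hmy z h1).le⟩

/-- `L(ξ, δ)` is above `γ` as soon as `ξ` is above a point of `C_δ` above `γ`. -/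
theorem Lt_gt {δ γ ζ ξ : Ω} (hζ : ζ ∈ Cs δ) (hg : γ < ζ) (h1 : ζ < ξ) (h2 : ξ < δ) :
    ∀ x ∈ Lt ξ δ, γ < x := fun _ hx =>
  (hg.trans_le (le_mx h2 hζ h1)).trans_le (mx_le_of_mem_Lt h2 hx)

noncomputable def e (α β : Ω) : ℕ :=
  open Classical in
  if h : α < β then max (low β α).card (e α (nxt β α)) else 0
termination_by (wellFounded_lt (α := Ω)).wrap β
decreasing_by exact nxt_lt h

theorem e_eq {α β : Ω} (h : α < β) : e α β = max (low β α).card (e α (nxt β α)) := by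
  rw [e]; simp [h]

theorem low_nxt {α β : Ω} (h : α < β) : low β (nxt β α) = low β α := by
  ext x
  rw [mem_low h, mem_low (nxt_lt h)]
  refine ⟨fun hx => ⟨hx.1, ?_⟩, fun hx => ⟨hx.1, hx.2.trans_le (le_nxt h)⟩⟩
  by_contra hcon
  exact absurd (nxt_le h hx.1 (not_lt.1 hcon)) (not_le.2 hx.2)

theorem low_card_lt {β η η' : Ω} (h : η ∈ Cs β) (h' : η' ∈ Cs β) (hlt : η < η') :
    (low β η).card < (low β η').card := by
  apply Finset.card_lt_card
  rw [Finset.ssubset_iff_of_subset]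
  · exact ⟨η, (mem_low (Cs_lt h')).2 ⟨h, hlt⟩, fun hx => lt_irrefl _ ((mem_low (Cs_lt h)).1 hx).2⟩
  · intro x hx
    have := (mem_low (Cs_lt h)).1 hx
    exact (mem_low (Cs_lt h')).2 ⟨this.1, this.2.trans hlt⟩

theorem e_props (β : Ω) : (∀ n, {ξ | ξ < β ∧ e ξ β ≤ n}.Finite) ∧
    ∀ α < β, {ξ | ξ < α ∧ e ξ α ≠ e ξ β}.Finite := by
  induction β using WellFoundedLT.induction with
  | ind β ih =>
    have key : ∀ η ∈ Cs β, {ξ | ξ < η ∧ e ξ η ≠ e ξ β}.Finite := by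
      intro η hη
      have hηβ := Cs_lt hη
      have hfin : ∀ η' ∈ insert η (low β η), ({η'} ∪ ({ξ | ξ < η' ∧ e ξ η' ≤ (low β η').card} ∪
          {ξ | ξ < η' ∧ e ξ η' ≠ e ξ η}) : Set Ω).Finite := by
        intro η' hη'
        have hle : η' ≤ η ∧ η' < β := by
          rcases Finset.mem_insert.1 hη' with rfl | h1
          · exact ⟨le_rfl, hηβ⟩
          · have := ((mem_low hηβ).1 h1).2
            exact ⟨this.le, this.trans hηβ⟩
        refine (Set.finite_singleton _).union (((ih η' hle.2).1 _).union ?_)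
        rcases hle.1.eq_or_lt with rfl | h1
        · simp
        · exact (ih η hηβ).2 η' h1
      refine (Set.Finite.biUnion (Finset.finite_toSet (insert η (low β η))) hfin).subset ?_
      rintro ξ ⟨hξ, hne⟩
      have hξβ := hξ.trans hηβ
      refine Set.mem_biUnion (x := nxt β ξ) ?_ ?_
      · rw [Finset.mem_coe, Finset.mem_insert]
        rcases (nxt_le hξβ hη hξ.le).eq_or_lt with h1 | h1
        · exact Or.inl h1
        · exact Or.inr ((mem_low hηβ).2 ⟨nxt_mem hξβ, h1⟩)
      · rcases (le_nxt hξβ).eq_or_lt with h1 | h1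
        · exact Or.inl h1
        · by_cases h2 : e ξ (nxt β ξ) ≤ (low β (nxt β ξ)).card
          · exact Or.inr (Or.inl ⟨h1, h2⟩)
          · refine Or.inr (Or.inr ⟨h1, ?_⟩)
            rw [low_nxt hξβ] at h2
            rw [e_eq hξβ, max_eq_right (not_le.1 h2).le] at hne
            exact hne.symm
    constructor
    · intro n
      have h1 : {η | η ∈ Cs β ∧ (low β η).card ≤ n}.Finite := by
        refine Set.Finite.of_finite_image (f := fun η => (low β η).card)
          ((Set.finite_Iic n).subset ?_) ?_
        · rintro _ ⟨η, hη, rfl⟩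
          exact hη.2
        · intro η hη η' hη' heq
          rcases lt_trichotomy η η' with h | h | h
          · exact absurd heq (low_card_lt hη.1 hη'.1 h).ne
          · exact h
          · exact absurd heq (low_card_lt hη'.1 hη.1 h).ne'
      refine (Set.Finite.biUnion h1 (t := fun η => {η} ∪ {ξ | ξ < η ∧ e ξ η ≤ n}) ?_).subset ?_
      · intro η hη
        exact (Set.finite_singleton _).union ((ih η (Cs_lt hη.1)).1 n)
      · rintro ξ ⟨hξ, hn⟩
        rw [e_eq hξ, max_le_iff] at hn
        refine Set.mem_biUnion (x := nxt β ξ) ⟨nxt_mem hξ, by rw [low_nxt hξ]; exact hn.1⟩ ?_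
        rcases (le_nxt hξ).eq_or_lt with h1 | h1
        · exact Or.inl h1
        · exact Or.inr ⟨h1, hn.2⟩
    · intro α hα
      obtain ⟨η, hη, hle⟩ := Cs_cof hα
      have h2 : {ξ | ξ < α ∧ e ξ α ≠ e ξ η}.Finite := by
        rcases hle.eq_or_lt with rfl | h1
        · simp
        · exact (ih η (Cs_lt hη)).2 α h1
      refine (h2.union (key η hη)).subset ?_
      rintro ξ ⟨hξ, hne⟩
      by_cases h3 : e ξ α = e ξ η
      · exact Or.inr ⟨hξ.trans_le hle, by rw [← h3]; exact hne⟩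
      · exact Or.inl ⟨hξ, h3⟩

theorem e_fin (β : Ω) (n : ℕ) : {ξ | ξ < β ∧ e ξ β ≤ n}.Finite := (e_props β).1 n

theorem e_coh {δ α β : Ω} (h1 : δ ≤ α) (h2 : δ ≤ β) : {ξ | ξ < δ ∧ e ξ α ≠ e ξ β}.Finite := by
  have key : ∀ γ, δ ≤ γ → {ξ | ξ < δ ∧ e ξ δ ≠ e ξ γ}.Finite := by
    intro γ h
    rcases h.eq_or_lt with rfl | h
    · simp
    · exact (e_props γ).2 δ h
  refine ((key α h1).union (key β h2)).subset ?_
  rintro ξ ⟨hξ, hne⟩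
  by_cases h3 : e ξ δ = e ξ α
  · exact Or.inr ⟨hξ, by rw [h3]; exact hne⟩
  · exact Or.inl ⟨hξ, h3⟩

end Walks

end LSpace


namespace LSpace

open Set

section Osc

variable {Ω : Type} [LinearOrder Ω]

/-- the oscillation condition at `ξ` relative to the finite set `L` -/
def IsOsc (f g : Ω → ℕ) (L : Finset Ω) (ξ : Ω) : Prop :=
  g ξ < f ξ ∧ ∃ η ∈ L, η < ξ ∧ (∀ ζ ∈ L, ζ < ξ → ζ ≤ η) ∧ f η ≤ g η

open Classical in
noncomputable def osc (f g : Ω → ℕ) (L : Finset Ω) : ℕ := (L.filter (IsOsc f g L)).card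

theorem IsOsc_congr {f g f' g' : Ω → ℕ} {L : Finset Ω} (hf : ∀ x ∈ L, f x = f' x)
    (hg : ∀ x ∈ L, g x = g' x) {ξ : Ω} (hξ : ξ ∈ L) : IsOsc f g L ξ ↔ IsOsc f' g' L ξ := by
  unfold IsOsc
  rw [hf ξ hξ, hg ξ hξ]
  refine and_congr_right fun _ => exists_congr fun η => and_congr_right fun hη => ?_
  rw [hf η hη, hg η hη]

theorem osc_congr {f g f' g' : Ω → ℕ} {L : Finset Ω} (hf : ∀ x ∈ L, f x = f' x)
    (hg : ∀ x ∈ L, g x = g' x) : osc f g L = osc f' g' L := by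
  classical
  unfold osc
  congr 1
  apply Finset.filter_congr
  intro x hx
  exact IsOsc_congr hf hg hx

open Classical in
theorem osc_union {f g : Ω → ℕ} {L F : Finset Ω} (h : ∀ x ∈ L, ∀ y ∈ F, x < y) :
    osc f g (L ∪ F) = osc f g L + (F.filter (IsOsc f g (L ∪ F))).card := by
  unfold osc
  rw [Finset.filter_union, Finset.card_union_of_disjoint]
  · congr 2
    apply Finset.filter_congr
    intro x hx
    unfold IsOsc
    refine and_congr_right fun _ => ?_
    constructor
    · rintro ⟨η, hη, hlt, hmax, hle⟩
      rcases Finset.mem_union.1 hη with h1 | h1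
      · exact ⟨η, h1, hlt, fun ζ hζ => hmax ζ (Finset.mem_union_left _ hζ), hle⟩
      · exact absurd (h x hx η h1) (not_lt.2 hlt.le)
    · rintro ⟨η, hη, hlt, hmax, hle⟩
      refine ⟨η, Finset.mem_union_left _ hη, hlt, fun ζ hζ hζx => ?_, hle⟩
      rcases Finset.mem_union.1 hζ with h1 | h1
      · exact hmax ζ h1 hζx
      · exact absurd (h x hx ζ h1) (not_lt.2 hζx.le)
  · rw [Finset.disjoint_left]
    intro x hx hx'
    exact lt_irrefl _ (h x (Finset.mem_filter.1 hx).1 x (Finset.mem_filter.1 hx').1)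

theorem osc_union_eq {f g : Ω → ℕ} {L F : Finset Ω} (h : ∀ x ∈ L, ∀ y ∈ F, x < y)
    (hF : ∀ x ∈ F, f x = g x) : osc f g (L ∪ F) = osc f g L := by
  classical
  rw [osc_union h, Finset.filter_false_of_mem]
  · simp
  · intro x hx hosc
    have := hosc.1
    rw [hF x hx] at this
    exact lt_irrefl _ this

theorem osc_union_gt {f g : Ω → ℕ} {L F : Finset Ω} (h : ∀ x ∈ L, ∀ y ∈ F, x < y)
    (hFne : F.Nonempty) (hF : ∀ x ∈ F, g x < f x)
    (hL : ∃ x ∈ L, (∀ y ∈ L, y ≤ x) ∧ f x ≤ g x) : osc f g (L ∪ F) = osc f g L + 1 := by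
  classical
  rw [osc_union h]
  congr 1
  rw [Finset.card_eq_one]
  refine ⟨F.min' hFne, ?_⟩
  obtain ⟨x0, hx0, hmax, hle⟩ := hL
  ext ξ
  rw [Finset.mem_filter, Finset.mem_singleton]
  constructor
  · rintro ⟨hξ, -, η, hη, hlt, hm, hfg⟩
    by_contra hne
    have h1 : F.min' hFne < ξ := lt_of_le_of_ne (Finset.min'_le _ _ hξ) (Ne.symm hne)
    have h2 := hm _ (Finset.mem_union_right _ (Finset.min'_mem F hFne)) h1
    rcases Finset.mem_union.1 hη with h3 | h3
    · exact absurd (h η h3 _ (Finset.min'_mem F hFne)) (not_lt.2 h2)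
    · exact absurd (hF η h3) (not_lt.2 hfg)
  · rintro rfl
    have hm := Finset.min'_mem F hFne
    refine ⟨hm, hF _ hm, x0, Finset.mem_union_left _ hx0, h x0 hx0 _ hm, ?_, hle⟩
    intro ζ hζ hlt
    rcases Finset.mem_union.1 hζ with h3 | h3
    · exact hmax ζ h3
    · exact absurd (Finset.min'_le _ _ h3) (not_le.2 hlt)

theorem osc_union_top {f g : Ω → ℕ} {L F : Finset Ω} (h : ∀ x ∈ L, ∀ y ∈ F, x < y)
    (hL : ∃ x ∈ L, (∀ y ∈ L, y ≤ x) ∧ g x < f x) :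
    osc f g (L ∪ F) = osc f g L + osc f g F := by
  classical
  rw [osc_union h]
  congr 1
  unfold osc
  congr 1
  apply Finset.filter_congr
  obtain ⟨x0, hx0, hmax, hgt⟩ := hL
  intro ξ hξ
  unfold IsOsc
  refine and_congr_right fun _ => ?_
  constructor
  · rintro ⟨η, hη, hlt, hm, hfg⟩
    rcases Finset.mem_union.1 hη with h3 | h3
    · have h4 := le_antisymm (hmax η h3) (hm x0 (Finset.mem_union_left _ hx0) (h x0 hx0 ξ hξ))
      rw [h4] at hfg
      exact absurd hgt (not_lt.2 hfg)
    · exact ⟨η, h3, hlt, fun ζ hζ => hm ζ (Finset.mem_union_right _ hζ), hfg⟩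
  · rintro ⟨η, hη, hlt, hm, hfg⟩
    refine ⟨η, Finset.mem_union_right _ hη, hlt, fun ζ hζ hζlt => ?_, hfg⟩
    rcases Finset.mem_union.1 hζ with h3 | h3
    · exact (h ζ h3 η hη).le
    · exact hm ζ h3 hζlt

end Osc

section Closure

variable {Ω : Type} [LinearOrder Ω] [OrderBot Ω] [WellFoundedLT Ω]
  [hc : ∀ a : Ω, Countable (Set.Iio a)] [Uncountable Ω]

theorem countable_Iic' (x : Ω) : (Set.Iic x).Countable := by
  have : Set.Iic x = Set.Iio x ∪ {x} := by
    ext y; simp [le_iff_lt_or_eq]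
  rw [this]
  exact (Set.to_countable _).union (Set.countable_singleton x)

theorem exists_ub {S : Set Ω} (hS : S.Countable) : ∃ b, ∀ x ∈ S, x < b := by
  have h1 : (⋃ x ∈ S, Set.Iic x).Countable := hS.biUnion fun x _ => countable_Iic' x
  have h2 : (⋃ x ∈ S, Set.Iic x) ≠ Set.univ := by
    intro h
    rw [h, Set.countable_univ_iff] at h1
    exact not_countable h1
  obtain ⟨b, hb⟩ := (Set.ne_univ_iff_exists_notMem _).1 h2
  refine ⟨b, fun x hx => ?_⟩
  by_contra hcon
  exact hb (Set.mem_biUnion hx (not_lt.1 hcon))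

theorem countable_finsets (δ : Ω) : {L : Finset Ω | ∀ x ∈ L, x < δ}.Countable := by
  have h1 := Set.countable_ofPred_finite_subset (s := Set.Iio δ) (Set.to_countable _)
  refine (h1.preimage_of_injOn (f := fun L : Finset Ω => (L : Set Ω))
    Finset.coe_injective.injOn).mono ?_
  intro L hL
  exact ⟨L.finite_toSet, fun x hx => hL x hx⟩

theorem closure_pt (f : Finset Ω → Ω → Ω → ℕ → ℕ → Ω) :
    ∃ δ, ⊥ < δ ∧ ∀ L γ ζ N M, (∀ x ∈ L, x < δ) → γ < δ → ζ < δ → f L γ ζ N M < δ := by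
  have h1 : ∀ δ : Ω, ∃ b, δ < b ∧ ∀ L γ ζ N M, (∀ x ∈ L, x < δ) → γ < δ → ζ < δ →
      f L γ ζ N M < b := by
    intro δ
    have hP : ({L : Finset Ω | ∀ x ∈ L, x < δ} ×ˢ (Set.Iio δ ×ˢ (Set.Iio δ ×ˢ
        (Set.univ : Set (ℕ × ℕ))))).Countable :=
      (countable_finsets δ).prod ((Set.to_countable _).prod ((Set.to_countable _).prod
        (Set.to_countable _)))
    obtain ⟨b, hb⟩ := exists_ub ((hP.image fun p => f p.1 p.2.1 p.2.2.1 p.2.2.2.1 p.2.2.2.2).union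
      (Set.countable_singleton δ))
    refine ⟨b, hb δ (Or.inr rfl), ?_⟩
    intro L γ ζ N M hL hγ hζ
    exact hb _ (Or.inl ⟨(L, γ, ζ, N, M), ⟨hL, hγ, hζ, trivial⟩, rfl⟩)
  choose g hg1 hg2 using h1
  let s : ℕ → Ω := fun n => g^[n] ⊥
  have hs : ∀ n, s (n + 1) = g (s n) := fun n => Function.iterate_succ_apply' g n ⊥
  have hmono : StrictMono s := strictMono_nat_of_lt_succ fun n => by rw [hs]; exact hg1 _
  have hne : {b | ∀ n, s n < b}.Nonempty := by
    obtain ⟨b, hb⟩ := exists_ub (Set.countable_range s)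
    exact ⟨b, fun n => hb _ ⟨n, rfl⟩⟩
  set δ := wellFounded_lt.min _ hne with hδ
  have hδ1 : ∀ n, s n < δ := wellFounded_lt.min_mem _ hne
  have hδ2 : ∀ x < δ, ∃ n, x < s n := by
    intro x hx
    by_contra hcon
    push Not at hcon
    have : x ∈ {b | ∀ n, s n < b} := fun n => (hmono (Nat.lt_succ_self n)).trans_le (hcon (n + 1))
    exact wellFounded_lt.not_lt_min _ this hx
  have hδ3 : ∀ L : Finset Ω, (∀ x ∈ L, x < δ) → ∃ n, ∀ x ∈ L, x < s n := by
    intro L hL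
    have : ∀ x : Ω, ∃ n, x ∈ L → x < s n := fun x => by
      by_cases hx : x ∈ L
      · obtain ⟨n, hn⟩ := hδ2 x (hL x hx)
        exact ⟨n, fun _ => hn⟩
      · exact ⟨0, fun h => absurd h hx⟩
    choose n hn using this
    exact ⟨L.sup n, fun x hx => (hn x hx).trans_le (hmono.monotone (Finset.le_sup hx))⟩
  refine ⟨δ, hδ1 0, ?_⟩
  intro L γ ζ N M hL hγ hζ
  obtain ⟨n1, h1⟩ := hδ3 L hL
  obtain ⟨n2, h2⟩ := hδ2 γ hγ
  obtain ⟨n3, h3⟩ := hδ2 ζ hζ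
  have hle1 : s n1 ≤ s (max n1 (max n2 n3)) := hmono.monotone (by omega)
  have hle2 : s n2 ≤ s (max n1 (max n2 n3)) := hmono.monotone (by omega)
  have hle3 : s n3 ≤ s (max n1 (max n2 n3)) := hmono.monotone (by omega)
  refine lt_trans ?_ (hδ1 (max n1 (max n2 n3) + 1))
  rw [hs]
  exact hg2 _ L γ ζ N M (fun x hx => (h1 x hx).trans_le hle1) (h2.trans_le hle2) (h3.trans_le hle3)

variable {ι : Type} [Finite ι]

theorem exists_code (ι : Type) [Finite ι] : ∃ code : Finset Ω → (ι → Ω) → ℕ, ∀ L a a',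
    code L a = code L a' → ∀ i, ∀ x ∈ L, e x (a i) = e x (a' i) := by
  have h : ∀ L : Finset Ω, ∃ c : (ι → L → ℕ) → ℕ, Function.Injective c := fun L =>
    Countable.exists_injective_nat _
  choose c hc using h
  refine ⟨fun L a => c L (fun i x => e x.1 (a i)), ?_⟩
  intro L a a' heq i x hx
  have := hc L heq
  exact congrFun (congrFun this i) ⟨x, hx⟩

/-- the finite-to-one property lets us make values large -/
theorem exists_big (A : Set (ι → Ω)) (hA : ∀ ζ, ∃ a ∈ A, ∀ i, ζ < a i) :
    ∃ v : Ω, ∀ F : Finset Ω, (∀ x ∈ F, v < x) → ∀ n ζ, ∃ a ∈ A,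
      ∀ i, ζ < a i ∧ ∀ x ∈ F, n < e x (a i) := by
  by_contra hcon
  push Not at hcon
  choose F hF n ζ hbad using hcon
  have hn : ∃ m, ∀ v, ∃ w, v < w ∧ n w = m := by
    by_contra h
    push Not at h
    choose b hb using h
    obtain ⟨w, hw⟩ := exists_ub (Set.countable_range b)
    exact hb (n w) w (hw _ ⟨_, rfl⟩) rfl
  obtain ⟨m, hm⟩ := hn
  have hstep : ∀ v, ∃ w, v < w ∧ (∀ x ∈ F v, x < w) ∧ n w = m := by
    intro v
    obtain ⟨u, hu⟩ := exists_ub ((F v).countable_toSet.union (Set.countable_singleton v))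
    obtain ⟨w, hw, hw'⟩ := hm u
    exact ⟨w, (hu v (Or.inr rfl)).trans hw, fun x hx => (hu x (Or.inl hx)).trans hw, hw'⟩
  choose h h1 h2 h3 using hstep
  let s : ℕ → Ω := fun k => h^[k + 1] ⊥
  have hs : ∀ k, s (k + 1) = h (s k) := fun k => Function.iterate_succ_apply' h (k + 1) ⊥
  have hsm : ∀ k, n (s k) = m := by
    intro k
    show n (h^[k + 1] ⊥) = m
    rw [Function.iterate_succ_apply']
    exact h3 _
  obtain ⟨z, hz⟩ := exists_ub ((Set.countable_range fun k => ζ (s k)).union (Set.countable_range s))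
  obtain ⟨a, ha, haz⟩ := hA z
  have hex : ∀ k, ∃ x ∈ F (s k), ∃ i, e x (a i) ≤ m := by
    intro k
    obtain ⟨i, hi⟩ := hbad (s k) a ha
    obtain ⟨x, hx, hxe⟩ := hi ((hz _ (Or.inl ⟨k, rfl⟩)).trans (haz i))
    exact ⟨x, hx, i, by rw [← hsm k]; exact hxe⟩
  choose x hx i hxi using hex
  have hxlt : ∀ k, x k < s (k + 1) := fun k => by rw [hs]; exact h2 _ _ (hx k)
  have hmono : StrictMono x := strictMono_nat_of_lt_succ fun k =>
    (hxlt k).trans (hF _ _ (hx (k + 1)))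
  have hfin : (⋃ i, {ξ | ξ < a i ∧ e ξ (a i) ≤ m}).Finite :=
    Set.finite_iUnion fun i => e_fin (a i) m
  refine Set.infinite_range_of_injective hmono.injective (hfin.subset ?_)
  rintro _ ⟨k, rfl⟩
  refine Set.mem_iUnion.2 ⟨i k, ?_, hxi k⟩
  exact (hxlt k).trans ((hz _ (Or.inr ⟨k + 1, rfl⟩)).trans (haz _))

structure Good (A : Set (ι → Ω)) (B : Set Ω) (δ : Ω) : Prop where
  bot_lt : ⊥ < δ
  lim : ∀ ζ < δ, ∃ ζ', ζ < ζ' ∧ ζ' < δ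
  refl : ∀ L : Finset Ω, (∀ x ∈ L, x < δ) → ∀ ζ < δ, ∀ a ∈ A, (∀ i, δ ≤ a i) →
    ∃ a' ∈ A, (∀ i, ζ < a' i ∧ a' i < δ) ∧ ∀ i, ∀ x ∈ L, e x (a' i) = e x (a i)
  big : ∀ L : Finset Ω, (∀ x ∈ L, x < δ) → ∀ a ∈ A, (∀ i, δ ≤ a i) →
    ∃ v < δ, ∀ F : Finset Ω, (∀ x ∈ F, v < x) → ∀ n ζ, ∃ a' ∈ A,
      (∀ i, ζ < a' i ∧ ∀ x ∈ F, n < e x (a' i)) ∧ ∀ i, ∀ x ∈ L, e x (a' i) = e x (a i)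
  refD : ∀ L : Finset Ω, (∀ x ∈ L, x < δ) → ∀ γ < δ, ∀ ζ < δ, ∀ a ∈ A, ∀ b ∈ B,
    (∀ i, δ ≤ a i) → δ ≤ b → Lt δ b = L → (∀ x, γ < x → x < δ → ∀ i, e x (a i) = e x b) →
    (∀ ξ, ζ < ξ → ξ < δ → ∀ x ∈ Lt ξ δ, γ < x) →
    ∀ ζ', ∃ δ', ζ' < δ' ∧ ∃ a' ∈ A, ∃ b' ∈ B, (∀ i, δ' ≤ a' i) ∧ δ' ≤ b' ∧ Lt δ' b' = L ∧
      (∀ x, γ < x → x < δ' → ∀ i, e x (a' i) = e x b') ∧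
      (∀ ξ, ζ < ξ → ξ < δ' → ∀ x ∈ Lt ξ δ', γ < x) ∧
      (∀ i, ∀ x ∈ L, e x (a' i) = e x (a i)) ∧ (∀ x ∈ L, e x b' = e x b)

theorem exists_good (A : Set (ι → Ω)) (B : Set Ω) : ∃ δ, Good A B δ := by
  obtain ⟨cA, hcA⟩ := exists_code (Ω := Ω) ι
  obtain ⟨cB, hcB⟩ := exists_code (Ω := Ω) Unit
  let A' : Finset Ω → ℕ → Set (ι → Ω) := fun L N => {a | a ∈ A ∧ cA L a = N}
  let D : Finset Ω → Ω → Ω → ℕ → ℕ → Set Ω := fun L γ ζ N M =>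
    {δ' | ∃ a' ∈ A' L N, ∃ b' ∈ B, cB L (fun _ => b') = M ∧ (∀ i, δ' ≤ a' i) ∧ δ' ≤ b' ∧
      Lt δ' b' = L ∧ (∀ x, γ < x → x < δ' → ∀ i, e x (a' i) = e x b') ∧
      (∀ ξ, ζ < ξ → ξ < δ' → ∀ x ∈ Lt ξ δ', γ < x)}
  have hf : ∀ L γ ζ N M, ∃ v : Ω,
      ((∃ a ∈ A' L N, ∀ i, ζ < a i) → ∃ a ∈ A' L N, ∀ i, ζ < a i ∧ a i < v) ∧
      ((∃ a ∈ A' L N, ∀ i, v < a i) → ∀ F : Finset Ω, (∀ x ∈ F, v < x) → ∀ n ζ', ∃ a ∈ A' L N,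
        ∀ i, ζ' < a i ∧ ∀ x ∈ F, n < e x (a i)) ∧
      ((∃ δ' ∈ D L γ ζ N M, v < δ') → ∀ ζ', ∃ δ' ∈ D L γ ζ N M, ζ' < δ') ∧ ζ < v := by
    intro L γ ζ N M
    have h1 : ∃ v, (∃ a ∈ A' L N, ∀ i, ζ < a i) → ∃ a ∈ A' L N, ∀ i, ζ < a i ∧ a i < v := by
      by_cases h : ∃ a ∈ A' L N, ∀ i, ζ < a i
      · obtain ⟨a, ha, hi⟩ := h
        obtain ⟨v, hv⟩ := exists_ub (Set.finite_range a).countable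
        exact ⟨v, fun _ => ⟨a, ha, fun i => ⟨hi i, hv _ ⟨i, rfl⟩⟩⟩⟩
      · exact ⟨⊥, fun h' => absurd h' h⟩
    have h2 : ∃ v, (∃ a ∈ A' L N, ∀ i, v < a i) → ∀ F : Finset Ω, (∀ x ∈ F, v < x) →
        ∀ n ζ', ∃ a ∈ A' L N, ∀ i, ζ' < a i ∧ ∀ x ∈ F, n < e x (a i) := by
      by_cases h : ∀ ζ, ∃ a ∈ A' L N, ∀ i, ζ < a i
      · obtain ⟨v, hv⟩ := exists_big (A' L N) h
        exact ⟨v, fun _ => hv⟩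
      · obtain ⟨v, hv⟩ := not_forall.1 h
        exact ⟨v, fun h' => absurd h' hv⟩
    have h3 : ∃ v, (∃ δ' ∈ D L γ ζ N M, v < δ') → ∀ ζ', ∃ δ' ∈ D L γ ζ N M, ζ' < δ' := by
      by_cases h : ∀ ζ', ∃ δ' ∈ D L γ ζ N M, ζ' < δ'
      · exact ⟨⊥, fun _ => h⟩
      · obtain ⟨v, hv⟩ := not_forall.1 h
        exact ⟨v, fun h' => absurd h' hv⟩
    obtain ⟨v1, h1⟩ := h1
    obtain ⟨v2, h2⟩ := h2
    obtain ⟨v3, h3⟩ := h3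
    obtain ⟨v, hv⟩ := exists_ub (S := {v1, v2, v3, ζ}) (Set.toFinite _).countable
    have hv1 : v1 < v := hv _ (by simp)
    have hv2 : v2 < v := hv _ (by simp)
    have hv3 : v3 < v := hv _ (by simp)
    refine ⟨v, ?_, ?_, ?_, hv _ (by simp)⟩
    · intro h
      obtain ⟨a, ha, hi⟩ := h1 h
      exact ⟨a, ha, fun i => ⟨(hi i).1, (hi i).2.trans hv1⟩⟩
    · rintro ⟨a, ha, hi⟩ F hF
      exact h2 ⟨a, ha, fun i => hv2.trans (hi i)⟩ F fun x hx => hv2.trans (hF x hx)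
    · rintro ⟨d, hd, hi⟩
      exact h3 ⟨d, hd, hv3.trans hi⟩
  choose f f1 f2 f3 f4 using hf
  obtain ⟨δ, hδ0, hδ⟩ := closure_pt f
  refine ⟨δ, hδ0, ?_, ?_, ?_, ?_⟩
  · intro ζ hζ
    exact ⟨f ∅ ⊥ ζ 0 0, f4 _ _ _ _ _, hδ _ _ _ _ _ (by simp) hδ0 hζ⟩
  · intro L hL ζ hζ a ha hai
    obtain ⟨a', ha', hi⟩ := f1 L ⊥ ζ (cA L a) 0 ⟨a, ⟨ha, rfl⟩, fun i => hζ.trans_le (hai i)⟩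
    have hv := hδ L ⊥ ζ (cA L a) 0 hL hδ0 hζ
    exact ⟨a', ha'.1, fun i => ⟨(hi i).1, (hi i).2.trans hv⟩, hcA _ _ _ ha'.2⟩
  · intro L hL a ha hai
    have hv := hδ L ⊥ ⊥ (cA L a) 0 hL hδ0 hδ0
    refine ⟨_, hv, fun F hF n ζ => ?_⟩
    obtain ⟨a', ha', hi⟩ := f2 L ⊥ ⊥ (cA L a) 0 ⟨a, ⟨ha, rfl⟩, fun i => hv.trans_le (hai i)⟩
      F hF n ζ
    exact ⟨a', ha'.1, hi, hcA _ _ _ ha'.2⟩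
  · intro L hL γ hγ ζ hζ a ha b hb hai hbi hLt hag hLg ζ'
    have hv := hδ L γ ζ (cA L a) (cB L fun _ => b) hL hγ hζ
    obtain ⟨δ', ⟨a', ha', b', hb', hcb, h1, h2, h3, h4, h5⟩, hlt⟩ :=
      f3 L γ ζ (cA L a) (cB L fun _ => b)
        ⟨δ, ⟨a, ⟨ha, rfl⟩, b, hb, rfl, hai, hbi, hLt, hag, hLg⟩, hv⟩ ζ'
    exact ⟨δ', hlt, a', ha'.1, b', hb', h1, h2, h3, h4, h5, hcA _ _ _ ha'.2,
      hcB _ _ _ hcb ()⟩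

end Closure

end LSpace


namespace LSpace

open Set

section Main

variable {Ω : Type} [LinearOrder Ω] [OrderBot Ω] [WellFoundedLT Ω]
  [hc : ∀ a : Ω, Countable (Set.Iio a)] [Uncountable Ω]
variable {ι : Type} [Finite ι]

theorem fin_bd {δ : Ω} (h0 : ⊥ < δ) {S : Set Ω} (hS : S.Finite) (h : ∀ x ∈ S, x < δ) :
    ∃ γ < δ, ∀ x ∈ S, x ≤ γ := by
  refine ⟨hS.toFinset.sup id, ?_, ?_⟩
  · rw [Finset.sup_lt_iff h0]
    intro x hx
    exact h x (by simpa using hx)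
  · intro x hx
    exact Finset.le_sup (f := id) (by simpa using hx)

theorem Good.exists_C {A : Set (ι → Ω)} {B : Set Ω} {δ : Ω} (hG : Good A B δ) {γ : Ω}
    (hγ : γ < δ) : ∃ ζ ∈ Cs δ, γ < ζ := by
  obtain ⟨γ', h1, h2⟩ := hG.lim γ hγ
  obtain ⟨ζ, h3, h4⟩ := Cs_cof h2
  exact ⟨ζ, h3, h1.trans_le h4⟩

theorem Good.step_eq {A : Set (ι → Ω)} {B : Set Ω} {δ : Ω} (hG : Good A B δ) {a : ι → Ω} {b : Ω}
    (ha : a ∈ A) (hb : b ∈ B) (hai : ∀ i, δ ≤ a i) (hbd : δ ≤ b) {γ1 : Ω} (hγ1 : γ1 < δ) :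
    ∃ a' ∈ A, ∃ b' ∈ B, ∃ F : Finset Ω, (∀ i, δ ≤ a' i) ∧ δ ≤ b' ∧ F.Nonempty ∧
      (∀ x ∈ F, γ1 < x) ∧ (∀ x ∈ Lt δ b, ∀ y ∈ F, x < y) ∧
      (∀ z, z ∈ Lt δ b' ↔ z ∈ Lt δ b ∨ z ∈ F) ∧
      (∀ i, ∀ x ∈ Lt δ b, e x (a' i) = e x (a i)) ∧ (∀ x ∈ Lt δ b, e x b' = e x b) ∧
      ∀ i, ∀ x ∈ F, e x (a' i) = e x b' := by
  have hL := Lt_lt hG.bot_lt hbd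
  have hfin : ((⋃ i, {ξ | ξ < δ ∧ e ξ (a i) ≠ e ξ b}) ∪ ((Lt δ b : Set Ω) ∪ {γ1})).Finite :=
    (Set.finite_iUnion fun i => e_coh (hai i) hbd).union
      ((Finset.finite_toSet _).union (Set.finite_singleton _))
  obtain ⟨γ, hγ, hγ'⟩ := fin_bd hG.bot_lt hfin (by
    rintro x (hx | hx | hx)
    · obtain ⟨i, hi⟩ := Set.mem_iUnion.1 hx
      exact hi.1
    · exact hL x hx
    · rw [Set.mem_singleton_iff.1 hx]; exact hγ1)
  obtain ⟨ζ, hζ, hγζ⟩ := hG.exists_C hγ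
  obtain ⟨δ', hδ', a', ha', b', hb', h1, h2, h3, h4, h5, h6, h7⟩ :=
    hG.refD (Lt δ b) hL γ hγ ζ (Cs_lt hζ) a ha b hb hai hbd rfl
      (by
        intro x hx hxδ i
        by_contra hne
        exact absurd (hγ' x (Or.inl (Set.mem_iUnion.2 ⟨i, hxδ, hne⟩))) (not_le.2 hx))
      (fun ξ hξ hξδ => Lt_gt hζ hγζ hξ hξδ) δ
  have hF : ∀ x ∈ Lt δ δ', γ < x := h5 δ (Cs_lt hζ) hδ'
  refine ⟨a', ha', b', hb', Lt δ δ', fun i => hδ'.le.trans (h1 i), hδ'.le.trans h2,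
    Lt_nonempty hδ', fun x hx => (hγ' γ1 (Or.inr (Or.inr rfl))).trans_lt (hF x hx),
    fun x hx y hy => (hγ' x (Or.inr (Or.inl hx))).trans_lt (hF y hy), ?_, h6, h7, ?_⟩
  · intro z
    rw [← h3]
    apply Lt_union hδ'.le h2
    intro x hx y hy
    rw [h3] at hx
    exact (hγ' x (Or.inr (Or.inl hx))).trans_lt (hF y hy)
  · intro i x hx
    exact h4 x (hF x hx) ((Lt_lt hG.bot_lt hδ'.le x hx).trans hδ') i

theorem Good.step_gt {A : Set (ι → Ω)} {B : Set Ω} {δ : Ω} (hG : Good A B δ) {a : ι → Ω} {b : Ω}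
    (ha : a ∈ A) (hb : b ∈ B) (hai : ∀ i, δ ≤ a i) (hbd : δ ≤ b) :
    ∃ a' ∈ A, ∃ b' ∈ B, ∃ F : Finset Ω, (∀ i, δ ≤ a' i) ∧ δ ≤ b' ∧ F.Nonempty ∧
      (∀ x ∈ Lt δ b, ∀ y ∈ F, x < y) ∧
      (∀ z, z ∈ Lt δ b' ↔ z ∈ Lt δ b ∨ z ∈ F) ∧
      (∀ i, ∀ x ∈ Lt δ b, e x (a' i) = e x (a i)) ∧ (∀ x ∈ Lt δ b, e x b' = e x b) ∧
      ∀ i, ∀ x ∈ F, e x b' < e x (a' i) := by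
  obtain ⟨v, hv, hbig⟩ := hG.big (Lt δ b) (Lt_lt hG.bot_lt hbd) a ha hai
  obtain ⟨-, -, b', hb', F, -, h2, h3, h4, h5, h6, -, h8, -⟩ := hG.step_eq ha hb hai hbd hv
  obtain ⟨a', ha', h9, h10⟩ := hbig F h4 (F.sup fun x => e x b') δ
  exact ⟨a', ha', b', hb', F, fun i => (h9 i).1.le, h2, h3, h5, h6, h10, h8,
    fun i x hx => (Finset.le_sup (f := fun x => e x b') hx).trans_lt ((h9 i).2 x hx)⟩

theorem Good.step {A : Set (ι → Ω)} {B : Set Ω} {δ : Ω} (hG : Good A B δ) {a : ι → Ω} {b : Ω}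
    (ha : a ∈ A) (hb : b ∈ B) (hai : ∀ i, δ ≤ a i) (hbd : δ ≤ b) :
    ∃ a' ∈ A, ∃ b' ∈ B, (∀ i, δ ≤ a' i) ∧ δ ≤ b' ∧ Lt δ b ⊆ Lt δ b' ∧
      (∀ i, ∀ x ∈ Lt δ b, e x (a' i) = e x (a i)) ∧
      (∀ i, osc (fun x => e x (a' i)) (fun x => e x b') (Lt δ b') =
        osc (fun x => e x (a i)) (fun x => e x b) (Lt δ b) + 1) ∧
      ∀ i, ∃ x ∈ Lt δ b', (∀ y ∈ Lt δ b', y ≤ x) ∧ e x b' < e x (a' i) := by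
  classical
  obtain ⟨a1, ha1, b1, hb1, F1, h1, h2, h3, -, h5, h6, h7, h8, h9⟩ :=
    hG.step_eq ha hb hai hbd hG.bot_lt
  obtain ⟨a2, ha2, b2, hb2, F2, k1, k2, k3, k5, k6, k7, k8, k9⟩ := hG.step_gt ha1 hb1 h1 h2
  have hL1 : Lt δ b1 = Lt δ b ∪ F1 := by ext z; rw [h6, Finset.mem_union]
  have hL2 : Lt δ b2 = Lt δ b1 ∪ F2 := by ext z; rw [k6, Finset.mem_union]
  refine ⟨a2, ha2, b2, hb2, k1, k2, ?_, ?_, ?_, ?_⟩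
  · rw [hL2, hL1]
    exact fun x hx => Finset.mem_union_left _ (Finset.mem_union_left _ hx)
  · intro i x hx
    rw [k7 i x ((h6 x).2 (Or.inl hx)), h7 i x hx]
  · intro i
    rw [hL2, osc_union_gt k5 k3 (k9 i)]
    · congr 1
      rw [hL1, osc_union_eq h5]
      · apply osc_congr
        · intro x hx
          show e x (a2 i) = e x (a i)
          rw [k7 i x ((h6 x).2 (Or.inl hx)), h7 i x hx]
        · intro x hx
          show e x b2 = e x b
          rw [k8 x ((h6 x).2 (Or.inl hx)), h8 x hx]
      · intro x hx
        show e x (a2 i) = e x b2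
        rw [k7 i x ((h6 x).2 (Or.inr hx)), k8 x ((h6 x).2 (Or.inr hx)), h9 i x hx]
    · have hm := Finset.max'_mem F1 h3
      have hm1 : F1.max' h3 ∈ Lt δ b1 := (h6 _).2 (Or.inr hm)
      refine ⟨F1.max' h3, hm1, ?_, ?_⟩
      · intro y hy
        rcases (h6 y).1 hy with hy | hy
        · exact (h5 y hy _ hm).le
        · exact Finset.le_max' _ _ hy
      · show e _ (a2 i) ≤ e _ b2
        rw [k7 i _ hm1, k8 _ hm1, h9 i _ hm]
  · intro i
    have hm := Finset.max'_mem F2 k3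
    refine ⟨F2.max' k3, (k6 _).2 (Or.inr hm), ?_, k9 i _ hm⟩
    intro y hy
    rcases (k6 y).1 hy with hy | hy
    · exact (k5 y hy _ hm).le
    · exact Finset.le_max' _ _ hy

theorem Good.iter {A : Set (ι → Ω)} {B : Set Ω} {δ : Ω} (hG : Good A B δ)
    (hA : ∃ a ∈ A, ∀ i, δ ≤ a i) (hB : ∃ b ∈ B, δ ≤ b) (n : ℕ) :
    ∃ a ∈ A, (∀ i, δ ≤ a i) ∧ ∃ b : ℕ → Ω, ∃ c : ι → ℕ, ∀ m ≤ n, b m ∈ B ∧ δ ≤ b m ∧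
      Lt δ (b m) ⊆ Lt δ (b n) ∧
      ∀ i, osc (fun x => e x (a i)) (fun x => e x (b m)) (Lt δ (b m)) = c i + m ∧
        ∃ x ∈ Lt δ (b m), (∀ y ∈ Lt δ (b m), y ≤ x) ∧ e x (b m) < e x (a i) := by
  induction n with
  | zero =>
    obtain ⟨a, ha, hai⟩ := hA
    obtain ⟨b, hb, hbd⟩ := hB
    obtain ⟨a', ha', b', hb', h1, h2, h3, h4, h5, h6⟩ := hG.step ha hb hai hbd
    refine ⟨a', ha', h1, fun _ => b', fun i => osc (fun x => e x (a i)) (fun x => e x b)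
      (Lt δ b) + 1, fun m hm => ⟨hb', h2, Finset.Subset.refl _, fun i => ⟨?_, h6 i⟩⟩⟩
    rw [Nat.le_zero.1 hm, h5 i]
  | succ n ih =>
    obtain ⟨a, ha, hai, b, c, h⟩ := ih
    obtain ⟨hbn, hbd, -, hn⟩ := h n le_rfl
    obtain ⟨a', ha', b', hb', h1, h2, h3, h4, h5, h6⟩ := hG.step ha hbn hai hbd
    refine ⟨a', ha', h1, Function.update b (n + 1) b', c, fun m hm => ?_⟩
    rcases Nat.lt_or_ge n m with hlt | hle
    · have : m = n + 1 := by omega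
      subst this
      simp only [Function.update_self]
      refine ⟨hb', h2, Finset.Subset.refl _, fun i => ⟨?_, h6 i⟩⟩
      rw [h5 i, (hn i).1]
      rfl
    · have hne : m ≠ n + 1 := by omega
      simp only [Function.update_self, Function.update_of_ne hne]
      obtain ⟨k1, k2, k3, k4⟩ := h m hle
      refine ⟨k1, k2, k3.trans h3, fun i => ⟨?_, ?_⟩⟩
      · rw [← (k4 i).1]
        exact osc_congr (fun x hx => h4 i x (k3 hx)) fun x hx => rfl
      · obtain ⟨x, hx, hxm, hlt⟩ := (k4 i).2
        exact ⟨x, hx, hxm, by rw [h4 i x (k3 hx)]; exact hlt⟩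

/-- The oscillation (Moore) of a pair of ordinals. -/
noncomputable def osc2 (α β : Ω) : ℕ := osc (fun x => e x α) (fun x => e x β) (Lt α β)

theorem osc_main {A : Set (ι → Ω)} {B : Set Ω} (hA : ∀ ζ, ∃ a ∈ A, ∀ i, ζ < a i)
    (hB : ∀ ζ, ∃ b ∈ B, ζ < b) (n : ℕ) :
    ∃ a ∈ A, ∃ b : ℕ → Ω, ∃ c : ι → ℕ, ∀ m ≤ n, b m ∈ B ∧
      ∀ i, a i < b m ∧ osc2 (a i) (b m) = c i + m := by
  classical
  obtain ⟨δ, hG⟩ := exists_good A B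
  obtain ⟨a1, ha1, h1⟩ := hA δ
  obtain ⟨b1, hb1, h1'⟩ := hB δ
  obtain ⟨a, ha, hai, b, c, h⟩ := hG.iter ⟨a1, ha1, fun i => (h1 i).le⟩ ⟨b1, hb1, h1'.le⟩ n
  have hbn := (h n le_rfl).2.1
  have hb0 := (h 0 (Nat.zero_le _)).2.1
  have hL := Lt_lt hG.bot_lt hbn
  have hfin : ((⋃ m ∈ Set.Iic n, {ξ | ξ < δ ∧ e ξ (b m) ≠ e ξ (b 0)}) ∪
      (Lt δ (b n) : Set Ω)).Finite :=
    (Set.Finite.biUnion (Set.finite_Iic n) fun m hm => e_coh (h m hm).2.1 hb0).union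
      (Finset.finite_toSet _)
  obtain ⟨γ, hγ, hγ'⟩ := fin_bd hG.bot_lt hfin (by
    rintro x (hx | hx)
    · obtain ⟨m, hm, hx⟩ := Set.mem_iUnion₂.1 hx
      exact hx.1
    · exact hL x hx)
  obtain ⟨ζ, hζ, hγζ⟩ := hG.exists_C hγ
  obtain ⟨a', ha', h2, h3⟩ := hG.refl (Lt δ (b n)) hL ζ (Cs_lt hζ) a ha hai
  have hF : ∀ i, ∀ x ∈ Lt (a' i) δ, γ < x := fun i => Lt_gt hζ hγζ (h2 i).1 (h2 i).2
  refine ⟨a', ha', b, fun i => c i + osc (fun x => e x (a' i)) (fun x => e x (b 0))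
    (Lt (a' i) δ), fun m hm => ?_⟩
  obtain ⟨k1, k2, k3, k4⟩ := h m hm
  refine ⟨k1, fun i => ⟨(h2 i).2.trans_le k2, ?_⟩⟩
  have hlt : ∀ x ∈ Lt δ (b m), ∀ y ∈ Lt (a' i) δ, x < y := fun x hx y hy =>
    (hγ' x (Or.inr (k3 hx))).trans_lt (hF i y hy)
  have hLu : Lt (a' i) (b m) = Lt δ (b m) ∪ Lt (a' i) δ := by
    ext z
    rw [Finset.mem_union]
    exact Lt_union (h2 i).2.le k2 hlt z
  have hbot : ⊥ < a' i := bot_le.trans_lt (h2 i).1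
  obtain ⟨k5, x, hx, hxm, hxlt⟩ := k4 i
  rw [osc2, hLu, osc_union_top hlt ⟨x, hx, hxm, by rw [h3 i x (k3 hx)]; exact hxlt⟩]
  rw [osc_congr (f' := fun x => e x (a i)) (g' := fun x => e x (b m)) (L := Lt δ (b m))
    (fun x hx => h3 i x (k3 hx)) (fun _ _ => rfl), k5]
  rw [osc_congr (f' := fun x => e x (a' i)) (g' := fun x => e x (b 0)) (L := Lt (a' i) δ)
    (fun _ _ => rfl)]
  · ring
  · intro x hx
    by_contra hne
    refine absurd (hγ' x (Or.inl (Set.mem_iUnion₂.2 ⟨m, hm, ?_, hne⟩))) (not_le.2 (hF i x hx))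
    exact (Lt_lt hbot (h2 i).2.le x hx).trans (h2 i).2

end Main

end LSpace


namespace LSpace

section Kronecker

open UnitAddTorus

variable {d : Type} [Fintype d]

theorem mFourier_nsmul (n : d → ℤ) (x p : UnitAddTorus d) (m : ℕ) :
    mFourier n (x + m • p) = mFourier n x * (mFourier n p) ^ m := by
  have hadd : ∀ x y : UnitAddTorus d, mFourier n (x + y) = mFourier n x * mFourier n y := by
    intro x y
    simp only [mFourier, ContinuousMap.coe_mk, Pi.add_apply]
    rw [← Finset.prod_mul_distrib]
    refine Finset.prod_congr rfl fun i _ => ?_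
    simp [fourier_apply, smul_add, AddCircle.toCircle_add]
  induction m with
  | zero => simp
  | succ m ih => rw [succ_nsmul, ← add_assoc, hadd, ih, pow_succ, mul_assoc]

theorem span_bdd (p : UnitAddTorus d) (hp : ∀ n : d → ℤ, n ≠ 0 → mFourier n p ≠ 1)
    (x : UnitAddTorus d) (f : C(UnitAddTorus d, ℂ))
    (hf : f ∈ Submodule.span ℂ (Set.range (mFourier (d := d)))) :
    ∃ C : ℝ, ∀ N : ℕ, ‖∑ m ∈ Finset.range N, (f (x + m • p) - f (m • p))‖ ≤ C := by
  induction hf using Submodule.span_induction with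
  | mem f hf =>
    obtain ⟨n, rfl⟩ := hf
    by_cases hn : n = 0
    · subst hn
      refine ⟨0, fun N => ?_⟩
      simp [mFourier_zero]
    · have hz := hp n hn
      set z := mFourier n p with hzdef
      have hznorm : ‖z‖ ≤ 1 := by
        calc ‖z‖ ≤ ‖mFourier n‖ := (mFourier n).norm_coe_le_norm p
          _ = 1 := mFourier_norm
      refine ⟨‖mFourier n x - 1‖ * (2 / ‖z - 1‖), fun N => ?_⟩
      have h0 : ∀ m : ℕ, mFourier n (x + m • p) - mFourier n (m • p) =
          (mFourier n x - 1) * z ^ m := by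
        intro m
        have h1 := mFourier_nsmul n 0 p m
        have h2 : mFourier n (0 : UnitAddTorus d) = 1 := by simp [mFourier]
        rw [zero_add, h2, one_mul] at h1
        rw [mFourier_nsmul, h1]
        ring
      simp_rw [h0]
      rw [← Finset.mul_sum, norm_mul, geom_sum_eq hz, norm_div]
      gcongr
      calc ‖z ^ N - 1‖ ≤ ‖z ^ N‖ + ‖(1 : ℂ)‖ := norm_sub_le _ _
        _ ≤ 1 + 1 := by
          rw [norm_pow, norm_one]
          gcongr
          exact pow_le_one₀ (norm_nonneg _) hznorm
        _ = 2 := by norm_num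
  | zero => exact ⟨0, fun N => by simp⟩
  | add f g _ _ hf hg =>
    obtain ⟨C, hC⟩ := hf
    obtain ⟨D, hD⟩ := hg
    refine ⟨C + D, fun N => ?_⟩
    have : ∑ m ∈ Finset.range N, ((f + g) (x + m • p) - (f + g) (m • p)) =
        ∑ m ∈ Finset.range N, (f (x + m • p) - f (m • p)) +
        ∑ m ∈ Finset.range N, (g (x + m • p) - g (m • p)) := by
      rw [← Finset.sum_add_distrib]
      refine Finset.sum_congr rfl fun m _ => ?_
      simp only [ContinuousMap.add_apply]
      ring
    rw [this]
    exact (norm_add_le _ _).trans (add_le_add (hC N) (hD N))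
  | smul c f _ hf =>
    obtain ⟨C, hC⟩ := hf
    refine ⟨‖c‖ * C, fun N => ?_⟩
    have : ∑ m ∈ Finset.range N, ((c • f) (x + m • p) - (c • f) (m • p)) =
        c * ∑ m ∈ Finset.range N, (f (x + m • p) - f (m • p)) := by
      rw [Finset.mul_sum]
      refine Finset.sum_congr rfl fun m _ => ?_
      simp only [ContinuousMap.smul_apply, smul_eq_mul]
      ring
    rw [this, norm_mul]
    gcongr
    exact hC N

theorem approx_bdd (p : UnitAddTorus d) (hp : ∀ n : d → ℤ, n ≠ 0 → mFourier n p ≠ 1)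
    (x : UnitAddTorus d) (f : C(UnitAddTorus d, ℂ)) (ε : ℝ) (hε : 0 < ε) :
    ∃ C : ℝ, ∀ N : ℕ, ‖∑ m ∈ Finset.range N, (f (x + m • p) - f (m • p))‖ ≤ C + N * ε := by
  have hmem : f ∈ closure (Submodule.span ℂ (Set.range (mFourier (d := d))) :
      Set C(UnitAddTorus d, ℂ)) := by
    have h1 := span_mFourier_closure_eq_top (d := d)
    have h2 : f ∈ (Submodule.span ℂ (Set.range (mFourier (d := d)))).topologicalClosure := by
      rw [h1]; trivial
    exact h2
  obtain ⟨g, hg, hdist⟩ := Metric.mem_closure_iff.1 hmem (ε / 2) (by positivity)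
  obtain ⟨C, hC⟩ := span_bdd p hp x g hg
  refine ⟨C, fun N => ?_⟩
  have hfg : ∀ y, ‖f y - g y‖ ≤ ε / 2 := by
    intro y
    rw [← dist_eq_norm]
    exact (ContinuousMap.dist_apply_le_dist y).trans hdist.le
  have : ∑ m ∈ Finset.range N, (f (x + m • p) - f (m • p)) =
      ∑ m ∈ Finset.range N, (g (x + m • p) - g (m • p)) +
      ∑ m ∈ Finset.range N, ((f (x + m • p) - g (x + m • p)) - (f (m • p) - g (m • p))) := by
    rw [← Finset.sum_add_distrib]
    refine Finset.sum_congr rfl fun m _ => ?_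
    ring
  rw [this]
  refine (norm_add_le _ _).trans (add_le_add (hC N) ?_)
  refine (norm_sum_le _ _).trans ?_
  calc _ ≤ ∑ m ∈ Finset.range N, ε := by
        refine Finset.sum_le_sum fun m _ => ?_
        refine (norm_sub_le _ _).trans ?_
        linarith [hfg (x + m • p), hfg (m • p)]
    _ = N * ε := by simp

theorem exists_net (ε : ℝ) (hε : 0 < ε) : ∃ T : Finset (UnitAddTorus d), ∀ x, ∃ y ∈ T,
    dist x y < ε := by
  obtain ⟨T, -, hT, hcov⟩ := (isCompact_univ (X := UnitAddTorus d)).finite_cover_balls hε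
  refine ⟨hT.toFinset, fun x => ?_⟩
  obtain ⟨y, hy, hxy⟩ := Set.mem_iUnion₂.1 (hcov (Set.mem_univ x))
  exact ⟨y, by simpa using hy, hxy⟩

theorem kron_dense (p : UnitAddTorus d) (hp : ∀ n : d → ℤ, n ≠ 0 → mFourier n p ≠ 1)
    (x0 : UnitAddTorus d) (ε : ℝ) (hε : 0 < ε) : ∃ m : ℕ, dist (m • p) x0 < ε := by
  by_contra hcon
  push Not at hcon
  let f : C(UnitAddTorus d, ℂ) := ⟨fun x => ((max 0 (ε - dist x x0) : ℝ) : ℂ), by fun_prop⟩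
  have hf : ∀ x, f x = ((max 0 (ε - dist x x0) : ℝ) : ℂ) := fun x => rfl
  have hf0 : ∀ m : ℕ, f (m • p) = 0 := by
    intro m
    rw [hf, max_eq_left (by linarith [hcon m])]
    simp
  obtain ⟨T, hT⟩ := exists_net (d := d) (ε / 2) (by positivity)
  have hTne : T.Nonempty := by
    obtain ⟨y, hy, -⟩ := hT 0
    exact ⟨y, hy⟩
  have hcard : (0 : ℝ) < T.card := by exact_mod_cast hTne.card_pos
  have hη : 0 < ε / (4 * T.card) := by positivity
  choose C hC using fun y : UnitAddTorus d => approx_bdd p hp (x0 - y) f (ε / (4 * T.card)) hη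
  have hlow : ∀ N : ℕ, (N : ℝ) * (ε / 2) ≤ (∑ y ∈ T, C y) + N * (ε / 4) := by
    intro N
    have h1 : ∀ m : ℕ, ε / 2 ≤ ∑ y ∈ T, max 0 (ε - dist ((x0 - y) + m • p) x0) := by
      intro m
      obtain ⟨y, hy, hd⟩ := hT (m • p)
      have h2 : dist ((x0 - y) + m • p) x0 = dist (m • p) y := by
        rw [dist_eq_norm, dist_eq_norm]
        congr 1
        abel
      calc ε / 2 ≤ max 0 (ε - dist ((x0 - y) + m • p) x0) := by
            rw [h2]
            exact le_max_of_le_right (by linarith)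
        _ ≤ _ := Finset.single_le_sum (f := fun y => max 0 (ε - dist ((x0 - y) + m • p) x0))
            (fun _ _ => le_max_left _ _) hy
    have h3 : ∀ y, ∑ m ∈ Finset.range N, max 0 (ε - dist ((x0 - y) + m • p) x0) ≤
        C y + N * (ε / (4 * T.card)) := by
      intro y
      have h4 := hC y N
      simp only [hf0, sub_zero, hf] at h4
      rw [← Complex.ofReal_sum, Complex.norm_real] at h4
      exact (le_abs_self _).trans h4
    calc (N : ℝ) * (ε / 2) = ∑ m ∈ Finset.range N, ε / 2 := by simp
      _ ≤ ∑ m ∈ Finset.range N, ∑ y ∈ T, max 0 (ε - dist ((x0 - y) + m • p) x0) :=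
          Finset.sum_le_sum fun m _ => h1 m
      _ = ∑ y ∈ T, ∑ m ∈ Finset.range N, max 0 (ε - dist ((x0 - y) + m • p) x0) :=
          Finset.sum_comm
      _ ≤ ∑ y ∈ T, (C y + N * (ε / (4 * T.card))) := Finset.sum_le_sum fun y _ => h3 y
      _ = (∑ y ∈ T, C y) + N * (ε / 4) := by
          rw [Finset.sum_add_distrib, Finset.sum_const, nsmul_eq_mul]
          congr 1
          field_simp
  obtain ⟨N, hN⟩ := exists_nat_gt ((∑ y ∈ T, C y) / (ε / 4))
  rw [div_lt_iff₀ (by positivity)] at hN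
  have := hlow N
  linarith

theorem kron_unif (p : UnitAddTorus d) (hp : ∀ n : d → ℤ, n ≠ 0 → mFourier n p ≠ 1)
    (ε : ℝ) (hε : 0 < ε) : ∃ N : ℕ, ∀ x : UnitAddTorus d, ∃ m ≤ N, dist (m • p) x < ε := by
  obtain ⟨T, hT⟩ := exists_net (d := d) (ε / 2) (by positivity)
  choose m hm using fun y => kron_dense p hp y (ε / 2) (by positivity)
  refine ⟨T.sup m, fun x => ?_⟩
  obtain ⟨y, hy, hd⟩ := hT x
  refine ⟨m y, Finset.le_sup hy, ?_⟩
  calc dist (m y • p) x ≤ dist (m y • p) y + dist y x := dist_triangle _ _ _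
    _ < ε / 2 + ε / 2 := add_lt_add (hm y) (by rwa [dist_comm])
    _ = ε := by ring

theorem mFourier_ne_one (θ : d → ℝ) (h : ∀ n : d → ℤ, n ≠ 0 → ∀ k : ℤ, ∑ i, n i * θ i ≠ k)
    (n : d → ℤ) (hn : n ≠ 0) : mFourier n (fun i => (θ i : UnitAddCircle)) ≠ 1 := by
  intro h1
  have h2 : mFourier n (fun i => (θ i : UnitAddCircle)) =
      Complex.exp (∑ i, 2 * Real.pi * Complex.I * n i * θ i) := by
    rw [Complex.exp_sum]
    simp only [mFourier, ContinuousMap.coe_mk]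
    refine Finset.prod_congr rfl fun i _ => ?_
    rw [fourier_coe_apply]
    simp
  rw [h2, Complex.exp_eq_one_iff] at h1
  obtain ⟨k, hk⟩ := h1
  refine h n hn k ?_
  have h3 : ∑ i, 2 * Real.pi * Complex.I * n i * θ i =
      (∑ i, (n i : ℂ) * θ i) * (2 * Real.pi * Complex.I) := by
    rw [Finset.sum_mul]
    exact Finset.sum_congr rfl fun i _ => by ring
  rw [h3] at hk
  have h4 := mul_right_cancel₀ Complex.two_pi_I_ne_zero hk
  exact_mod_cast h4

open Cardinal in
theorem exists_theta (Ω : Type) (hΩ : #Ω ≤ ℵ₁) : ∃ θ : Ω → ℝ,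
    ∀ (ι : Type) [Fintype ι] (a : ι → Ω), Function.Injective a → ∀ n : ι → ℤ, n ≠ 0 →
      ∀ k : ℤ, ∑ i, n i * θ (a i) ≠ k := by
  classical
  have h1 : LinearIndepOn ℚ id ({1} : Set ℝ) := LinearIndepOn.singleton one_ne_zero
  obtain ⟨S, b, h1S, hb⟩ : ∃ (S : Set ℝ) (b : Module.Basis S ℚ ℝ),
      (1 : ℝ) ∈ S ∧ ∀ s, b s = (s : ℝ) :=
    ⟨_, Module.Basis.extend h1, h1.subset_extend _ rfl,
      fun s => Module.Basis.extend_apply_self h1 s⟩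
  have hSc : #S = 𝔠 := by
    rw [← Real.rank_rat_real]
    exact b.mk_eq_rank''
  have hS' : #Ω ≤ #(S \ {1} : Set ℝ) := by
    have h2 := Cardinal.mk_sdiff_add_mk (S := S) (T := {1}) (Set.singleton_subset_iff.2 h1S)
    rw [hSc, Cardinal.mk_singleton] at h2
    by_contra hcon
    have h3 : #(S \ {1} : Set ℝ) < 𝔠 :=
      (not_le.1 hcon).trans_le (hΩ.trans aleph_one_le_continuum)
    have h4 := Cardinal.add_lt_of_lt aleph0_le_continuum h3
      (one_lt_aleph0.trans aleph0_lt_continuum)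
    exact absurd h2 h4.ne
  obtain ⟨φ⟩ := Cardinal.le_def _ _ |>.1 hS'
  refine ⟨fun ω => (φ ω : ℝ), ?_⟩
  intro ι _ a ha n hn k hk
  let v : Option ι → S := fun o => o.elim ⟨1, h1S⟩ fun i => ⟨φ (a i), ((Set.mem_sdiff _).1 (φ (a i)).2).1⟩
  have hv : Function.Injective v := by
    rintro (_ | i) (_ | j) h
    · rfl
    · exact absurd (congrArg Subtype.val h).symm ((Set.mem_sdiff _).1 (φ (a j)).2).2
    · exact absurd (congrArg Subtype.val h) ((Set.mem_sdiff _).1 (φ (a i)).2).2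
    · have := congrArg Subtype.val h
      exact congrArg some (ha (φ.injective (Subtype.ext this)))
  have hli := b.linearIndependent.comp v hv
  rw [Fintype.linearIndependent_iff] at hli
  have h0 := hli (fun o => o.elim (-k : ℚ) fun i => (n i : ℚ)) (by
    rw [Fintype.sum_option]
    simp only [Function.comp, hb, v, Option.elim, Rat.smul_def]
    push_cast
    have hk' : ∑ i, (n i : ℝ) * (φ (a i) : ℝ) = k := hk
    rw [hk']
    ring)
  apply hn
  funext i
  have := h0 (some i)
  simpa using this

end Kronecker

end LSpace


namespace LSpace

open Set

section Space

variable {Ω : Type} [LinearOrder Ω] [OrderBot Ω] [WellFoundedLT Ω]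
  [hc : ∀ a : Ω, Countable (Set.Iio a)] [Uncountable Ω]

open Classical in
/-- the points of the L space, as functions into the circle -/
noncomputable def pt (θ : Ω → ℝ) (β : Ω) : Ω → UnitAddCircle := fun α =>
  if α < β then (osc2 α β + 1) • (θ α : UnitAddCircle) else 0

theorem pigeon {X γ : Type} [Countable γ] {S : Set X} (hS : ¬ S.Countable) (g : X → γ) :
    ∃ c, ¬ {x | x ∈ S ∧ g x = c}.Countable := by
  by_contra hcon
  push Not at hcon
  apply hS
  refine (Set.countable_iUnion hcon).mono ?_
  intro x hx
  exact Set.mem_iUnion.2 ⟨g x, hx, rfl⟩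

theorem exists_root {S : Set Ω} (hS : ¬ S.Countable) (a : Ω → Finset Ω) (k : ℕ)
    (hk : ∀ x ∈ S, (a x).card = k) : ∃ r : Finset Ω, ¬ {x | x ∈ S ∧ r ⊆ a x}.Countable ∧
      ∀ α, α ∉ r → {x | x ∈ S ∧ insert α r ⊆ a x}.Countable := by
  by_contra hcon
  push Not at hcon
  have h : ∀ j : ℕ, ∃ r : Finset Ω, r.card = j ∧ ¬ {x | x ∈ S ∧ r ⊆ a x}.Countable := by
    intro j
    induction j with
    | zero => exact ⟨∅, rfl, by simpa using hS⟩
    | succ j ih =>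
      obtain ⟨r, hr, hr'⟩ := ih
      obtain ⟨α, hα, hα'⟩ := hcon r hr'
      exact ⟨insert α r, by rw [Finset.card_insert_of_notMem hα, hr], hα'⟩
  obtain ⟨r, hr, hr'⟩ := h (k + 1)
  have hne : {x | x ∈ S ∧ r ⊆ a x}.Nonempty := by
    rw [Set.nonempty_iff_ne_empty]
    intro h0
    rw [h0] at hr'
    exact hr' Set.countable_empty
  obtain ⟨x, hx, hrx⟩ := hne
  have := Finset.card_le_card hrx
  rw [hk x hx] at this
  omega

theorem key (θ : Ω → ℝ)
    (hθ : ∀ (ι : Type) [Fintype ι] (a : ι → Ω), Function.Injective a → ∀ n : ι → ℤ, n ≠ 0 →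
      ∀ k : ℤ, ∑ i, n i * θ (a i) ≠ k)
    {S : Set Ω} (hS : ¬ S.Countable) (a : Ω → Finset Ω) (q : Ω → ℕ) :
    ∃ x ∈ S, ∃ y ∈ S, x < y ∧
      ∀ α ∈ a x, dist (pt θ y α) (pt θ x α) < 1 / ((q x : ℝ) + 1) := by
  classical
  obtain ⟨⟨q0, k⟩, hS1⟩ := pigeon hS fun x => (q x, (a x).card)
  set S1 := {x | x ∈ S ∧ (q x, (a x).card) = (q0, k)} with hS1def
  obtain ⟨r, hS2, hr⟩ := exists_root hS1 a k fun x hx => congrArg Prod.snd hx.2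
  set S2 := {x | x ∈ S1 ∧ r ⊆ a x} with hS2def
  set ε : ℝ := 1 / ((q0 : ℝ) + 1) with hε
  have hεpos : 0 < ε := by positivity
  have hen : ∀ x, ∃ f : Fin (k - r.card) → Ω, x ∈ S2 →
      Function.Injective f ∧ ∀ α, α ∈ a x \ r ↔ ∃ i, f i = α := by
    intro x
    by_cases hx : x ∈ S2
    · have hcard : (a x \ r).card = k - r.card := by
        rw [Finset.card_sdiff_of_subset hx.2]
        congr 1
        exact congrArg Prod.snd hx.1.2
      let E := (a x \ r).equivFinOfCardEq hcard
      refine ⟨fun i => (E.symm i).1, fun _ => ⟨?_, ?_⟩⟩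
      · intro i j hij
        exact E.symm.injective (Subtype.ext hij)
      · intro α
        constructor
        · intro hα
          exact ⟨E ⟨α, hα⟩, by simp⟩
        · rintro ⟨i, rfl⟩
          exact (E.symm i).2
    · by_cases hne : Nonempty (Fin (k - r.card) → Ω)
      · exact ⟨hne.some, fun h => absurd h hx⟩
      · exact absurd ⟨fun _ => (⊥ : Ω)⟩ hne
  choose en hen using hen
  have hN : ∀ x, ∃ N : ℕ, x ∈ S2 → ∀ t : UnitAddTorus (Fin (k - r.card)),
      ∃ m ≤ N, dist (m • (fun i => (θ (en x i) : UnitAddCircle)) : UnitAddTorus _) t < ε := by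
    intro x
    by_cases hx : x ∈ S2
    · obtain ⟨N, hN⟩ := kron_unif (d := Fin (k - r.card))
        (fun i => (θ (en x i) : UnitAddCircle))
        (mFourier_ne_one _ (hθ _ (en x) (hen x hx).1)) ε hεpos
      exact ⟨N, fun _ => hN⟩
    · exact ⟨0, fun h => absurd h hx⟩
  choose N hN using hN
  obtain ⟨T, hT⟩ := exists_net (d := r) (ε / 2) (by positivity)
  choose τ hτ1 hτ2 using hT
  obtain ⟨⟨N0, τ0⟩, hS3⟩ := pigeon hS2 fun x =>
    (N x, (⟨τ (fun α : r => pt θ x α), hτ1 _⟩ : T))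
  set S3 := {x | x ∈ S2 ∧ (N x, (⟨τ (fun α : r => pt θ x α), hτ1 _⟩ : T)) = (N0, τ0)} with hS3def
  have hub : ∀ ζ, ∃ x ∈ S3, ζ < x ∧ ∀ i, ζ < en x i := by
    intro ζ
    have hcount : (Set.Iic ζ ∪ ⋃ α ∈ (Set.Iic ζ ∩ {α | α ∉ r}),
        {x | x ∈ S1 ∧ insert α r ⊆ a x}).Countable := by
      refine (countable_Iic' ζ).union (Set.Countable.biUnion
        ((countable_Iic' ζ).mono Set.inter_subset_left) ?_)
      intro α hα
      exact hr α hα.2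
    by_contra hcon
    push Not at hcon
    apply hS3
    refine hcount.mono ?_
    intro x hx
    by_cases hle : x ≤ ζ
    · exact Or.inl hle
    · obtain ⟨i, hi⟩ := hcon x hx (not_le.1 hle)
      have hmem := ((hen x hx.1).2 (en x i)).2 ⟨i, rfl⟩
      rw [Finset.mem_sdiff] at hmem
      exact Or.inr (Set.mem_biUnion (x := en x i) ⟨hi, hmem.2⟩
        ⟨hx.1.1, Finset.insert_subset hmem.1 hx.1.2⟩)
  let A : Set (Option (Fin (k - r.card)) → Ω) := {t | ∃ x ∈ S3, t = fun o => o.elim x (en x)}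
  have hA : ∀ ζ, ∃ t ∈ A, ∀ i, ζ < t i := by
    intro ζ
    obtain ⟨x, hx, h1, h2⟩ := hub ζ
    refine ⟨_, ⟨x, hx, rfl⟩, ?_⟩
    rintro (_ | i)
    · exact h1
    · exact h2 i
  have hB : ∀ ζ, ∃ b ∈ S3, ζ < b := by
    intro ζ
    obtain ⟨x, hx, h1, -⟩ := hub ζ
    exact ⟨x, hx, h1⟩
  obtain ⟨_, ⟨x, hx, rfl⟩, b, c, hb⟩ := osc_main hA hB N0
  have hNx : N x = N0 := congrArg Prod.fst hx.2
  obtain ⟨m, hm, hdist⟩ := hN x hx.1 fun i =>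
    pt θ x (en x i) - (c (some i) + 1) • (θ (en x i) : UnitAddCircle)
  rw [hNx] at hm
  obtain ⟨hbm, hosc⟩ := hb m hm
  have hqx : q x = q0 := congrArg Prod.fst hx.1.1.2
  refine ⟨x, hx.1.1.1, b m, hbm.1.1.1, (hosc none).1, ?_⟩
  intro α hα
  rw [hqx, ← hε]
  by_cases hαr : α ∈ r
  · have h1 := congrArg (fun z : ℕ × T => (z.2 : UnitAddTorus r)) hx.2
    have h2 := congrArg (fun z : ℕ × T => (z.2 : UnitAddTorus r)) hbm.2
    simp only at h1 h2
    have h3 := hτ2 (fun α : r => pt θ x α)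
    have h4 := hτ2 (fun α : r => pt θ (b m) α)
    rw [h1] at h3
    rw [h2] at h4
    have h5 := (dist_le_pi_dist _ _ (⟨α, hαr⟩ : r)).trans_lt h3
    have h6 := (dist_le_pi_dist _ _ (⟨α, hαr⟩ : r)).trans_lt h4
    simp only at h5 h6
    rw [dist_comm] at h5
    linarith [dist_triangle (pt θ (b m) α) (τ0.1 ⟨α, hαr⟩) (pt θ x α)]
  · obtain ⟨i, rfl⟩ := ((hen x hx.1).2 α).1 (Finset.mem_sdiff.2 ⟨hα, hαr⟩)
    obtain ⟨h1, h2⟩ := hosc (some i)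
    have h1' : en x i < b m := h1
    have h2' : osc2 (en x i) (b m) = c (some i) + m := h2
    have h3 := (dist_le_pi_dist _ _ i).trans_lt hdist
    simp only [Pi.smul_apply] at h3
    have h4 : pt θ (b m) (en x i) = (c (some i) + m + 1) • (θ (en x i) : UnitAddCircle) := by
      simp only [pt, h1', if_true, h2']
    rw [h4]
    rw [dist_eq_norm] at h3 ⊢
    refine lt_of_eq_of_lt (congrArg norm ?_) h3
    simp only [add_smul]
    abel

/-- greedy right-separated subset -/
def greedy {Ω : Type} [LinearOrder Ω] [WellFoundedLT Ω] (s : Set Ω) (V : Ω → Set Ω) (y : Ω) : Prop :=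
  y ∈ s ∧ ∀ x, x < y → greedy s V x → y ∉ V x
termination_by (wellFounded_lt (α := Ω)).wrap y
decreasing_by assumption

theorem greedy_iff {Ω : Type} [LinearOrder Ω] [WellFoundedLT Ω] (s : Set Ω) (V : Ω → Set Ω) (y : Ω) :
    greedy s V y ↔ y ∈ s ∧ ∀ x, x < y → greedy s V x → y ∉ V x := by
  rw [greedy]

theorem pt_ne (θ : Ω → ℝ)
    (hθ : ∀ (ι : Type) [Fintype ι] (a : ι → Ω), Function.Injective a → ∀ n : ι → ℤ, n ≠ 0 →
      ∀ k : ℤ, ∑ i, n i * θ (a i) ≠ k) {α β : Ω} (h : α < β) : pt θ β α ≠ 0 := by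
  simp only [pt, h, if_true]
  intro h0
  rw [← AddCircle.coe_nsmul, AddCircle.coe_eq_zero_iff] at h0
  obtain ⟨n, hn⟩ := h0
  have := hθ Unit (fun _ => α) (fun _ _ _ => rfl) (fun _ => ((osc2 α β + 1 : ℕ) : ℤ))
    (by
      intro h
      have := congrFun h ()
      simp only [Pi.zero_apply] at this
      omega) n
  apply this
  simp only [zsmul_eq_mul, mul_one, nsmul_eq_mul] at hn
  simp [hn]

theorem pt_self (θ : Ω → ℝ) {α β : Ω} (h : β ≤ α) : pt θ β α = 0 := by
  simp [pt, not_lt.2 h]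

theorem main (θ : Ω → ℝ)
    (hθ : ∀ (ι : Type) [Fintype ι] (a : ι → Ω), Function.Injective a → ∀ n : ι → ℤ, n ≠ 0 →
      ∀ k : ℤ, ∑ i, n i * θ (a i) ≠ k) :
    ∃ t : TopologicalSpace Ω,
      @T2Space Ω t ∧ @RegularSpace Ω t ∧ @HereditarilyLindelofSpace Ω t ∧
        ¬ @TopologicalSpace.SeparableSpace Ω t := by
  let t : TopologicalSpace Ω := TopologicalSpace.induced (pt θ) inferInstance
  have hind : Topology.IsInducing (pt θ) := ⟨rfl⟩
  have hinj : Function.Injective (pt θ) := by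
    have h1 : ∀ x y : Ω, x < y → pt θ x ≠ pt θ y := by
      intro x y hxy h
      have := congrFun h x
      rw [pt_self θ le_rfl] at this
      exact pt_ne θ hθ hxy this.symm
    intro x y h
    rcases lt_trichotomy x y with hlt | heq | hlt
    · exact absurd h (h1 x y hlt)
    · exact heq
    · exact absurd h.symm (h1 y x hlt)
  have hemb : Topology.IsEmbedding (pt θ) := ⟨hind, hinj⟩
  refine ⟨t, hemb.t2Space, hind.regularSpace, ⟨fun s _ => ?_⟩, ?_⟩
  · apply isLindelof_of_countable_subcover
    intro ι U hU hs
    have hi : ∀ x, ∃ O : Set Ω, ∃ a : Finset Ω, ∃ q : ℕ, x ∈ s → (∃ i, O = U i) ∧ x ∈ O ∧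
        ∀ y, (∀ α ∈ a, dist (pt θ y α) (pt θ x α) < 1 / ((q : ℝ) + 1)) → y ∈ O := by
      intro x
      by_cases hx : x ∈ s
      · obtain ⟨i, hi⟩ := Set.mem_iUnion.1 (hs hx)
        obtain ⟨O', hO', heq⟩ := hind.isOpen_iff.1 (hU i)
        have hx' : pt θ x ∈ O' := by
          rw [← heq] at hi
          exact hi
        obtain ⟨I, u, hu, hsub⟩ := isOpen_pi_iff.1 hO' _ hx'
        have hq : ∀ α, ∃ n : ℕ, α ∈ I → Metric.ball (pt θ x α) (1 / ((n : ℝ) + 1)) ⊆ u α := by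
          intro α
          by_cases hα : α ∈ I
          · obtain ⟨ε, hε, hball⟩ := Metric.isOpen_iff.1 (hu α hα).1 _ (hu α hα).2
            obtain ⟨n, hn⟩ := exists_nat_one_div_lt hε
            exact ⟨n, fun _ => (Metric.ball_subset_ball hn.le).trans hball⟩
          · exact ⟨0, fun h => absurd h hα⟩
        choose n hn using hq
        refine ⟨U i, I, I.sup n, fun _ => ⟨⟨i, rfl⟩, hi, ?_⟩⟩
        intro y hy
        rw [← heq]
        apply hsub
        intro α hα
        apply hn α hα
        rw [Metric.mem_ball]
        refine (hy α hα).trans_le ?_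
        have : n α ≤ I.sup n := Finset.le_sup hα
        gcongr
      · exact ⟨∅, ∅, 0, fun h => absurd h hx⟩
    choose V a q hV using hi
    have hSc : {y | greedy s V y}.Countable := by
      by_contra hS
      obtain ⟨x, hx, y, hy, hxy, hd⟩ := key θ hθ hS a q
      have hx' := (greedy_iff s V x).1 hx
      exact ((greedy_iff s V y).1 hy).2 x hxy hx ((hV x hx'.1).2.2 y hd)
    have hidx : ∀ x, ∃ i : Option ι, x ∈ s → ∃ j, i = some j ∧ V x = U j := by
      intro x
      by_cases hx : x ∈ s
      · obtain ⟨i, hi⟩ := (hV x hx).1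
        exact ⟨some i, fun _ => ⟨i, rfl, hi⟩⟩
      · exact ⟨none, fun h => absurd h hx⟩
    choose idx hidx using hidx
    refine ⟨{j | some j ∈ idx '' {y | greedy s V y}},
      (hSc.image idx).preimage_of_injOn (Option.some_injective ι).injOn, ?_⟩
    intro y hy
    have hcov : ∃ x, greedy s V x ∧ y ∈ V x := by
      by_cases hg : greedy s V y
      · exact ⟨y, hg, (hV y hy).2.1⟩
      · rw [greedy_iff] at hg
        push Not at hg
        obtain ⟨x, -, hx, hyx⟩ := hg hy
        exact ⟨x, hx, hyx⟩
    obtain ⟨x, hx, hyx⟩ := hcov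
    obtain ⟨j, hj, hVj⟩ := hidx x ((greedy_iff s V x).1 hx).1
    refine Set.mem_biUnion (x := j) ⟨x, hx, hj⟩ ?_
    rw [← hVj]
    exact hyx
  · rintro ⟨D, hD, hdense⟩
    obtain ⟨α, hα⟩ := exists_ub hD
    obtain ⟨β, hβ⟩ := exists_ub (Set.countable_singleton α)
    have hopen : IsOpen {x : Ω | pt θ x α ≠ 0} := by
      have hcont : Continuous fun x : Ω => pt θ x α :=
        (continuous_apply α).comp hind.continuous
      exact isOpen_ne_fun hcont continuous_const
    obtain ⟨x, hx, hxD⟩ := hdense.inter_open_nonempty _ hopen ⟨β, pt_ne θ hθ (hβ α rfl)⟩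
    exact hx (pt_self θ (hα x hxD).le)

end Space

end LSpace

open Cardinal in
/-- **Theorem (Moore).** There exists a regular Hausdorff topological space which
is hereditarily Lindelöf and not separable (an L space). -/
theorem statement2 :
    ∃ (X : Type) (t : TopologicalSpace X),
      @T2Space X t ∧ @RegularSpace X t ∧ @HereditarilyLindelofSpace X t ∧
        ¬ @TopologicalSpace.SeparableSpace X t := by
  let Ω : Type := (ℵ₁ : Cardinal.{0}).ord.ToType
  have hmk : #Ω = ℵ₁ := by simp [Ω]
  have : Uncountable Ω := by
    rw [← Cardinal.aleph0_lt_mk_iff, hmk]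
    exact aleph0_lt_aleph_one
  have : ∀ a : Ω, Countable (Set.Iio a) := by
    intro a
    have h1 : #(Set.Iio a) < #Ω := Cardinal.mk_Iio_lt a (by rw [hmk]; simp [Ω])
    exact Cardinal.mk_le_aleph0_iff.1 (Cardinal.lt_aleph_one_iff.1 (h1.trans_eq hmk))
  have : Nonempty Ω := inferInstance
  let : OrderBot Ω := WellFoundedLT.toOrderBot Ω
  obtain ⟨θ, hθ⟩ := LSpace.exists_theta Ω hmk.le
  exact ⟨Ω, LSpace.main θ hθ⟩
end
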